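/- arXiv:1209.6084 — 3 statements merged into one kernel-verified Lean document; each statement's English description precedes it below -/
import Mathlib

section
/- For traceless n×n matrices a, b over F (F = ℝ or ℂ, n ≥ 2), the Killing form of sl(n,F) satisfies ⟨a,b⟩ = 2n·tr(ab). -/
/-- The trace of an endomorphism of matrices, in terms of the standard basis. -/
theorem trace_matrix_end {F : Type*} [Field F] (n : ℕ)
    (f : Matrix (Fin n) (Fin n) F →ₗ[F] Matrix (Fin n) (Fin n) F) :
    LinearMap.trace F _ f = ∑ i, ∑ j, f (Matrix.single i j 1) i j := by
  rw [LinearMap.trace_eq_matrix_trace F (Matrix.stdBasis F (Fin n) (Fin n)), Matrix.trace,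
    Fintype.sum_prod_type]
  refine Finset.sum_congr rfl fun i _ => Finset.sum_congr rfl fun j _ => ?_
  rw [Matrix.diag_apply, LinearMap.toMatrix_apply, Matrix.stdBasis_eq_single]
  generalize f (Matrix.single i j 1) = M
  have h : M = ∑ k, ∑ l, M k l • Matrix.stdBasis F (Fin n) (Fin n) (k, l) := by
    conv_lhs => rw [Matrix.matrix_eq_sum_single M]
    simp [Matrix.stdBasis_eq_single]
  conv_lhs => rw [h]
  simp [Finsupp.single_apply, Prod.ext_iff, ite_and]

open LieAlgebra.SpecialLinear in
/-- For traceless `n × n` matrices `a`, `b` over `F = ℝ` or `ℂ` (`n ≥ 2`), the Killing form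
of `sl(n,F)` satisfies `⟨a,b⟩ = 2n · tr(ab)`. -/
theorem stmt9 {F : Type*} [RCLike F] (n : ℕ) (hn : 2 ≤ n)
    (a b : sl (Fin n) F) :
    killingForm F (sl (Fin n) F) a b =
      2 * (n : F) *
        Matrix.trace ((a : Matrix (Fin n) (Fin n) F) * (b : Matrix (Fin n) (Fin n) F)) := by
  let _ : LieRing (Matrix (Fin n) (Fin n) F) := LieRing.ofAssociativeRing
  obtain ⟨A, hA⟩ := a
  obtain ⟨B, hB⟩ := b
  have hA' : A.trace = 0 := hA
  have hB' : B.trace = 0 := hB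
  let f : Matrix (Fin n) (Fin n) F →ₗ[F] Matrix (Fin n) (Fin n) F :=
    (LinearMap.mulLeft F A - LinearMap.mulRight F A) ∘ₗ
      (LinearMap.mulLeft F B - LinearMap.mulRight F B)
  have hf : ∀ v, f v ∈ (sl (Fin n) F).toSubmodule := by
    intro v
    change Matrix.trace (A * (B * v - v * B) - (B * v - v * B) * A) = 0
    rw [Matrix.trace_sub, Matrix.trace_mul_comm, sub_self]
  let G : Matrix (Fin n) (Fin n) F →ₗ[F] sl (Fin n) F := f.codRestrict _ hf
  have h1 : killingForm F (sl (Fin n) F) ⟨A, hA⟩ ⟨B, hB⟩ =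
      LinearMap.trace F _ (G ∘ₗ (sl (Fin n) F).toSubmodule.subtype) := by
    rw [killingForm_apply_apply]
    congr 1
  rw [h1, LinearMap.trace_comp_comm']
  have h2 : (sl (Fin n) F).toSubmodule.subtype ∘ₗ G = f := rfl
  rw [h2, trace_matrix_end]
  have h3 : ∀ i j, f (Matrix.single i j 1) i j =
      (A * B) i i + (B * A) j j - A i i * B j j - B i i * A j j := by
    intro i j
    have : f (Matrix.single i j 1) = (A * B) * Matrix.single i j 1 + Matrix.single i j 1 * (B * A)
        - A * Matrix.single i j 1 * B - B * Matrix.single i j 1 * A := by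
      change A * (B * _ - _ * B) - (B * _ - _ * B) * A = _
      noncomm_ring
    rw [this]
    have h4 : ∀ C D : Matrix (Fin n) (Fin n) F,
        (C * Matrix.single i j (1 : F) * D : Matrix (Fin n) (Fin n) F) i j = C i i * D j j := by
      intro C D
      simp [Matrix.mul_apply, Matrix.single_apply, ite_and]
    have h5 := h4 (A * B) 1
    have h6 := h4 1 (B * A)
    simp only [Matrix.mul_one, Matrix.one_mul, Matrix.one_apply_eq, mul_one, one_mul] at h5 h6
    simp only [Matrix.sub_apply, Matrix.add_apply, h4, h5, h6]
  simp only [h3, Finset.sum_sub_distrib, Finset.sum_add_distrib, ← Finset.mul_sum]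
  have tA : ∑ i, A i i = 0 := hA'
  have tB : ∑ i, B i i = 0 := hB'
  have tAB : ∑ i, (A * B) i i = (A * B).trace := rfl
  have tBA : ∑ i, (B * A) i i = (A * B).trace := Matrix.trace_mul_comm B A
  simp only [tA, tB, tBA, mul_zero, Finset.sum_const_zero, Finset.sum_const, Finset.card_univ,
    Fintype.card_fin, nsmul_eq_mul]
  rw [← Finset.mul_sum, tAB]
  ring
end

section
/- Every a ∈ su(l,j) with a² = 0 is SU(l,j)-conjugate to t·a for every real t > 0; consequently, 0 lies in the closure of the SU(l,j)-adjoint orbit of a. -/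
open Matrix

/-- The diagonal matrix of the Hermitian form of signature `(l, n − l)` on `ℂⁿ`. -/
noncomputable def etaMat (l n : ℕ) : Matrix (Fin n) (Fin n) ℂ :=
  Matrix.diagonal fun i => if (i : ℕ) < l then (1 : ℂ) else -1

/-- Orthogonal projection onto the range of `a`. -/
theorem exists_range_proj {n : ℕ} (a : Matrix (Fin n) (Fin n) ℂ) :
    ∃ P : Matrix (Fin n) (Fin n) ℂ, Pᴴ = P ∧ P * P = P ∧ P * a = a ∧
      ∀ b : Matrix (Fin n) (Fin n) ℂ, b * a = 0 → b * P = 0 := by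
  let T := Matrix.toEuclideanCLM (n := Fin n) (𝕜 := ℂ)
  let W : Submodule ℂ (EuclideanSpace ℂ (Fin n)) := LinearMap.range (T a).toLinearMap
  let p := W.starProjection
  have hp : IsStarProjection p := isStarProjection_starProjection
  have hT : T (T.symm p) = p := T.apply_symm_apply p
  refine ⟨T.symm p, ?_, ?_, ?_, ?_⟩
  · apply (EquivLike.injective T)
    rw [← Matrix.star_eq_conjTranspose, map_star, hT]
    exact hp.isSelfAdjoint
  · apply (EquivLike.injective T)
    rw [map_mul, hT]
    exact hp.isIdempotentElem
  · apply (EquivLike.injective T)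
    rw [map_mul, hT]
    ext1 v
    exact Submodule.starProjection_eq_self_iff.mpr ⟨v, rfl⟩
  · intro b hb
    apply (EquivLike.injective T)
    rw [map_mul, hT, map_zero]
    ext1 v
    obtain ⟨w, hw⟩ : p v ∈ W := Submodule.starProjection_apply_mem W v
    have h : (T b * T a) w = 0 := by rw [← map_mul, hb, map_zero]; rfl
    change T b (p v) = 0
    rw [← hw]
    exact h

theorem eta_sq (l n : ℕ) : etaMat l n * etaMat l n = 1 := by
  unfold etaMat
  rw [Matrix.diagonal_mul_diagonal, ← Matrix.diagonal_one]
  congr 1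
  ext i
  split_ifs <;> simp

theorem eta_herm (l n : ℕ) : (etaMat l n)ᴴ = etaMat l n := by
  unfold etaMat
  rw [Matrix.diagonal_conjTranspose]
  congr 1
  ext i
  simp only [Pi.star_apply]
  split_ifs <;> simp

/-- The key algebraic construction. -/
theorem key {n : ℕ} (e a : Matrix (Fin n) (Fin n) ℂ) (he : e * e = 1) (heh : eᴴ = e)
    (hskew : aᴴ * e + e * a = 0) (hsq : a * a = 0) (t : ℝ) (ht : 0 < t) :
    ∃ g : Matrix (Fin n) (Fin n) ℂ, gᴴ * e * g = e ∧ g.det = 1 ∧ g * a * g⁻¹ = (t : ℂ) • a := by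
  obtain ⟨P, hPh, hPP, hPa, hP⟩ := exists_range_proj a
  have haP : a * P = 0 := hP a hsq
  have hPah : P * aᴴ = 0 := by
    have := congrArg conjTranspose haP
    simpa [conjTranspose_mul, hPh] using this
  have hahP : aᴴ * P = aᴴ := by
    have := congrArg conjTranspose hPa
    simpa [conjTranspose_mul, hPh] using this
  have hea : e * a = -(aᴴ * e) := by rw [eq_neg_iff_add_eq_zero, add_comm]; exact hskew
  have hae : a * e = -(e * aᴴ) := by
    have : e * (e * a) * e = -(e * (aᴴ * e) * e) := by rw [hea]; noncomm_ring
    calc a * e = (e * e) * a * e := by rw [he, one_mul]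
      _ = e * (e * a) * e := by noncomm_ring
      _ = -(e * (aᴴ * e) * e) := this
      _ = -(e * aᴴ * (e * e)) := by noncomm_ring
      _ = _ := by rw [he, mul_one]
  obtain ⟨Q, hQ⟩ : ∃ Q, Q = e * P * e := ⟨_, rfl⟩
  have hQa : Q * a = 0 := by
    calc Q * a = e * P * (e * a) := by rw [hQ]; noncomm_ring
      _ = -(e * (P * aᴴ) * e) := by rw [hea]; noncomm_ring
      _ = 0 := by rw [hPah]; simp
  have haQ : a * Q = a := by
    calc a * Q = (a * e) * P * e := by rw [hQ]; noncomm_ring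
      _ = -(e * (aᴴ * P) * e) := by rw [hae]; noncomm_ring
      _ = -(e * aᴴ) * e := by rw [hahP]; noncomm_ring
      _ = a * (e * e) := by rw [← hae]; noncomm_ring
      _ = a := by rw [he, mul_one]
  have hQP : Q * P = 0 := hP Q hQa
  have hQh : Qᴴ = Q := by
    rw [hQ]; simp [conjTranspose_mul, hPh, heh, mul_assoc]
  have hPQ : P * Q = 0 := by
    have := congrArg conjTranspose hQP
    simpa [conjTranspose_mul, hPh, hQh] using this
  have hQQ : Q * Q = Q := by
    calc Q * Q = e * P * (e * e) * P * e := by rw [hQ]; noncomm_ring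
      _ = e * (P * P) * e := by rw [he]; noncomm_ring
      _ = Q := by rw [hPP, hQ]
  have heP : e * P = Q * e := by rw [hQ, mul_assoc, he, mul_one]
  have heQ : e * Q = P * e := by
    rw [hQ, mul_assoc, ← mul_assoc, ← mul_assoc, he, one_mul]
  let G : ℝ → Matrix (Fin n) (Fin n) ℂ := fun s =>
    (s : ℂ) • P + ((s : ℂ)⁻¹) • Q + (1 - P - Q)
  have hGmul : ∀ s r : ℝ, G s * G r = G (s * r) := by
    intro s r
    simp only [G, add_mul, mul_add, sub_mul, mul_sub, smul_mul_assoc, mul_smul_comm, hPP, hQQ,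
      hPQ, hQP, mul_one, one_mul, smul_zero, Complex.ofReal_mul, mul_inv]
    module
  have hG1 : G 1 = 1 := by simp [G]
  have hGh : ∀ s, (G s)ᴴ = G s := by
    intro s
    simp [G, hPh, hQh, conjTranspose_smul]
  have hGe : ∀ s, e * G s = G s⁻¹ * e := by
    intro s
    simp only [G, add_mul, mul_add, sub_mul, mul_sub, smul_mul_assoc, mul_smul_comm, heP, heQ,
      mul_one, one_mul, Complex.ofReal_inv, inv_inv]
    abel
  have hGinv : ∀ s : ℝ, s ≠ 0 → G s * G s⁻¹ = 1 := by
    intro s hs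
    rw [hGmul, mul_inv_cancel₀ hs, hG1]
  have hdet2 : ∀ s : ℝ, s ≠ 0 → (G s).det * (G s).det = 1 := by
    intro s hs
    have h1 := congrArg det (hGe s)
    have h2 := congrArg det (hGinv s hs)
    have h3 := congrArg det he
    simp only [det_mul, det_one] at h1 h2 h3
    have h4 : (G s).det = (G s⁻¹).det := by linear_combination e.det * h1 + ((G s⁻¹).det - (G s).det) * h3
    rw [← h4] at h2
    exact h2
  obtain ⟨s, hs, hst⟩ : ∃ s : ℝ, 0 < s ∧ s * s = t :=
    ⟨√t, Real.sqrt_pos.mpr ht, Real.mul_self_sqrt ht.le⟩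
  obtain ⟨u, hu, hus⟩ : ∃ u : ℝ, 0 < u ∧ u * u = s :=
    ⟨√s, Real.sqrt_pos.mpr hs, Real.mul_self_sqrt hs.le⟩
  have hinv : (G s)⁻¹ = G s⁻¹ := Matrix.inv_eq_right_inv (hGinv s hs.ne')
  refine ⟨G s, ?_, ?_, ?_⟩
  · rw [hGh, mul_assoc, hGe, ← mul_assoc, hGinv s hs.ne', one_mul]
  · rw [← hus, ← hGmul, det_mul, hdet2 u hu.ne']
  · rw [hinv]
    have h1 : G s * a = (s : ℂ) • a := by
      simp [G, add_mul, sub_mul, hPa, hQa]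
    have h2 : a * G s⁻¹ = (s : ℂ) • a := by
      simp [G, mul_add, mul_sub, haP, haQ]
    rw [h1, smul_mul_assoc, h2, smul_smul, ← Complex.ofReal_mul, hst]

/-- Every `a ∈ su(l,j)` with `a² = 0` is `SU(l,j)`-conjugate to `t·a` for every real
`t > 0`; consequently `0` lies in the closure of the `SU(l,j)`-adjoint orbit of `a`. -/
theorem stmt16 (l j : ℕ) (a : Matrix (Fin (l + j)) (Fin (l + j)) ℂ)
    (htr : Matrix.trace a = 0)
    (hskew : aᴴ * etaMat l (l + j) + etaMat l (l + j) * a = 0)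
    (hsq : a * a = 0) :
    (∀ t : ℝ, 0 < t →
      ∃ g : Matrix (Fin (l + j)) (Fin (l + j)) ℂ,
        gᴴ * etaMat l (l + j) * g = etaMat l (l + j) ∧ g.det = 1 ∧
          g * a * g⁻¹ = (t : ℂ) • a) ∧
    (0 : Matrix (Fin (l + j)) (Fin (l + j)) ℂ) ∈
      closure {b | ∃ g : Matrix (Fin (l + j)) (Fin (l + j)) ℂ,
        gᴴ * etaMat l (l + j) * g = etaMat l (l + j) ∧ g.det = 1 ∧ b = g * a * g⁻¹} := by
  have h := key (etaMat l (l + j)) a (eta_sq _ _) (eta_herm _ _) hskew hsq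
  refine ⟨h, ?_⟩
  have hlim : Filter.Tendsto (fun t : ℝ => (t : ℂ) • a) (nhdsWithin 0 (Set.Ioi 0)) (nhds 0) := by
    have hc : Continuous (fun t : ℝ => (t : ℂ) • a) := by fun_prop
    have := hc.tendsto 0
    simp only [Complex.ofReal_zero, zero_smul] at this
    exact this.mono_left nhdsWithin_le_nhds
  refine mem_closure_of_tendsto hlim ?_
  filter_upwards [self_mem_nhdsWithin] with t ht
  obtain ⟨g, h1, h2, h3⟩ := h t ht
  exact ⟨g, h1, h2, h3.symm⟩
end

section
/- Let Z and L be algebraic sets in a finite-dimensional real vector space S (zero sets of polynomial maps). If L contains every real-analytic curve [0,δ) → S starting at 0 and lying entirely in Z, then L contains all points of Z sufficiently close to 0. -/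
open Polynomial Filter Topology

/-- evaluation of a bivariate polynomial -/
noncomputable def bev {R : Type*} [CommRing R] (P : R[X][X]) (t y : R) : R :=
  (P.map (evalRingHom t)).eval y

lemma bev_eq_sum {R : Type*} [CommRing R] (P : R[X][X]) (t y : R) :
    bev P t y = ∑ i ∈ Finset.range (P.natDegree + 1), (P.coeff i).eval t * y ^ i := by
  unfold bev
  rw [Polynomial.eval_map, Polynomial.eval₂_eq_sum_range]
  rfl

lemma bev_continuous (P : ℝ[X][X]) : Continuous fun p : ℝ × ℝ => bev P p.1 p.2 := by
  simp only [bev_eq_sum]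
  refine continuous_finsetSum _ fun i _ => ?_
  exact ((P.coeff i).continuous.comp continuous_fst).mul (continuous_snd.pow i)

lemma bev_hasDerivAt (P : ℝ[X][X]) (t y : ℝ) :
    HasDerivAt (fun y => bev P t y) (bev P.derivative t y) y := by
  unfold bev
  rw [← Polynomial.derivative_map]
  exact Polynomial.hasDerivAt _ _

lemma bev_root_bound (P : ℝ[X][X]) (hP : P.Monic) (t y : ℝ) (h : bev P t y = 0) :
    |y| ≤ 1 + ∑ i ∈ Finset.range P.natDegree, |(P.coeff i).eval t| := by
  by_contra! hlt
  have hS : 0 ≤ ∑ i ∈ Finset.range P.natDegree, |(P.coeff i).eval t| :=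
    Finset.sum_nonneg fun _ _ => abs_nonneg _
  have hy1 : 1 < |y| := by linarith
  rw [bev_eq_sum, Finset.sum_range_succ, hP.coeff_natDegree] at h
  simp only [eval_one, one_mul] at h
  rcases Nat.eq_zero_or_pos P.natDegree with h0 | h0
  · simp [h0] at h
  obtain ⟨n, hn⟩ : ∃ n, P.natDegree = n + 1 := ⟨P.natDegree - 1, by omega⟩
  have h1 : |y| ^ P.natDegree ≤ (∑ i ∈ Finset.range P.natDegree, |(P.coeff i).eval t|) * |y| ^ n := by
    have : y ^ P.natDegree = - ∑ i ∈ Finset.range P.natDegree, (P.coeff i).eval t * y ^ i := by linarith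
    rw [← abs_pow, this, abs_neg]
    refine (Finset.abs_sum_le_sum_abs _ _).trans ?_
    rw [Finset.sum_mul]
    refine Finset.sum_le_sum fun i hi => ?_
    rw [abs_mul, abs_pow]
    refine mul_le_mul_of_nonneg_left ?_ (abs_nonneg _)
    exact pow_le_pow_right₀ hy1.le (by have := Finset.mem_range.1 hi; omega)
  have hpos : 0 < |y| ^ n := by positivity
  have : |y| ^ P.natDegree = |y| * |y| ^ n := by rw [hn]; ring
  rw [this] at h1
  have := le_of_mul_le_mul_right h1 hpos
  linarith

/-- real root continuation, oriented. -/
lemma real_cont (P : ℝ[X][X]) (hP : P.Monic) (s a : ℝ) (hs : ∃ y, bev P s y = 0)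
    (ha : ¬ ∃ y, bev P a y = 0) :
    ∃ b ∈ Set.uIcc s a, ∃ y, bev P b y = 0 ∧ bev P.derivative b y = 0 := by
  let γ : ℝ → ℝ := fun τ => s + τ * (a - s)
  have hγ : Continuous γ := by fun_prop
  obtain ⟨M, hM⟩ : ∃ M, ∀ τ ∈ Set.Icc (0:ℝ) 1,
      1 + ∑ i ∈ Finset.range P.natDegree, |(P.coeff i).eval (γ τ)| ≤ M := by
    have hc : ContinuousOn
        (fun τ => 1 + ∑ i ∈ Finset.range P.natDegree, |(P.coeff i).eval (γ τ)|)
        (Set.Icc (0:ℝ) 1) := by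
      refine Continuous.continuousOn ?_
      refine continuous_const.add (continuous_finsetSum _ fun i _ => ?_)
      exact ((P.coeff i).continuous.comp hγ).abs
    obtain ⟨M, hM⟩ := isCompact_Icc.bddAbove_image hc
    exact ⟨M, fun τ hτ => hM ⟨τ, hτ, rfl⟩⟩
  let S : Set (ℝ × ℝ) := (Set.Icc (0:ℝ) 1 ×ˢ Set.Icc (-M) M) ∩ {p | bev P (γ p.1) p.2 = 0}
  have hSc : IsCompact S := by
    refine (isCompact_Icc.prod isCompact_Icc).inter_right ?_
    exact isClosed_eq ((bev_continuous P).comp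
      ((hγ.comp continuous_fst).prodMk continuous_snd)) continuous_const
  have memS : ∀ τ ∈ Set.Icc (0:ℝ) 1, ∀ y, bev P (γ τ) y = 0 → (τ, y) ∈ S := fun τ hτ y hy =>
    ⟨⟨hτ, abs_le.1 ((bev_root_bound P hP _ _ hy).trans (hM τ hτ))⟩, hy⟩
  obtain ⟨y0, hy0⟩ := hs
  have hSne : S.Nonempty := ⟨(0, y0), memS 0 (by simp) y0 (by simpa [γ] using hy0)⟩
  obtain ⟨⟨τ, y⟩, ⟨⟨hτ, -⟩, hroot⟩, hmax⟩ := hSc.exists_isMaxOn hSne continuous_fst.continuousOn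
  simp only [Set.mem_ofPred_eq] at hroot hτ
  have hτ1 : τ < 1 := by
    refine lt_of_le_of_ne hτ.2 ?_
    rintro rfl
    exact ha ⟨y, by simpa [γ] using hroot⟩
  refine ⟨γ τ, ?_, y, hroot, ?_⟩
  · rw [Set.mem_uIcc]
    rcases le_total s a with h | h
    · left; constructor <;> simp only [γ] <;> nlinarith [hτ.1, hτ.2]
    · right; constructor <;> simp only [γ] <;> nlinarith [hτ.1, hτ.2]
  by_contra hd
  have hder := bev_hasDerivAt P (γ τ) y
  obtain ⟨y1, y2, h1, h2⟩ : ∃ y1 y2, bev P (γ τ) y1 < 0 ∧ 0 < bev P (γ τ) y2 := by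
    by_contra! hno
    have key : IsLocalExtr (fun y => bev P (γ τ) y) y := by
      by_cases hh : ∃ y1, bev P (γ τ) y1 < 0
      · obtain ⟨y1, h1⟩ := hh
        right
        refine Eventually.of_forall fun z => ?_
        simp only [hroot]
        exact hno y1 z h1
      · push Not at hh
        left
        refine Eventually.of_forall fun z => ?_
        simp only [hroot]
        exact hh z
    exact hd (key.hasDerivAt_eq_zero hder)
  have ev1 : ∀ᶠ τ' in 𝓝 τ, bev P (γ τ') y1 < 0 := by
    have : Continuous fun τ' => bev P (γ τ') y1 :=
      (bev_continuous P).comp (hγ.prodMk continuous_const)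
    exact this.continuousAt.eventually_lt continuousAt_const h1
  have ev2 : ∀ᶠ τ' in 𝓝 τ, 0 < bev P (γ τ') y2 := by
    have : Continuous fun τ' => bev P (γ τ') y2 :=
      (bev_continuous P).comp (hγ.prodMk continuous_const)
    exact continuousAt_const.eventually_lt this.continuousAt h2
  have ev3 : ∀ᶠ τ' in 𝓝[>] τ, τ' ∈ Set.Ioo τ 1 := Ioo_mem_nhdsGT hτ1
  obtain ⟨τ', ⟨e1, e2⟩, e3⟩ := (((ev1.and ev2).filter_mono nhdsWithin_le_nhds).and ev3).exists
  have hcy : Continuous fun z => bev P (γ τ') z :=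
      (bev_continuous P).comp (continuous_const.prodMk continuous_id)
  obtain ⟨z, hz⟩ := mem_range_of_exists_le_of_exists_ge hcy ⟨y1, e1.le⟩ ⟨y2, e2.le⟩
  have := hmax (memS τ' ⟨hτ.1.trans e3.1.le, e3.2.le⟩ z hz)
  simp only [Set.mem_ofPred_eq] at this
  exact absurd e3.1 (not_lt.2 this)

lemma bev_map {R S : Type*} [CommRing R] [CommRing S] (f : R →+* S) (P : R[X][X]) (t y : R) :
    f (bev P t y) = bev (P.map (mapRingHom f)) (f t) (f y) := by
  unfold bev
  rw [← Polynomial.eval_map_apply, Polynomial.map_map, Polynomial.map_map]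
  congr 2
  ext x <;> simp

/-- The hyperreals, as a germ type. -/
abbrev Hy : Type := Germ (hyperfilter ℕ : Filter ℕ) ℝ

lemma Hy.exists_rep (x : Hy) : ∃ f : ℕ → ℝ, Germ.coeRingHom _ f = x := by
  induction x using Germ.inductionOn with
  | _ f => exact ⟨f, rfl⟩

lemma Hy.zero_iff (f : ℕ → ℝ) : (Germ.coeRingHom _ f : Hy) = 0 ↔ ∀ᶠ n in (hyperfilter ℕ : Filter ℕ), f n = 0 :=
  Germ.coe_eq

lemma Hy.le_iff (f g : ℕ → ℝ) : (Germ.coeRingHom _ f : Hy) ≤ Germ.coeRingHom _ g ↔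
    ∀ᶠ n in (hyperfilter ℕ : Filter ℕ), f n ≤ g n :=
  Germ.coe_le

lemma hyper_cont (P : Hy[X][X]) (hP : P.Monic) (s a : Hy) (hs : ∃ y, bev P s y = 0)
    (hd : ∀ b ∈ Set.uIcc s a, ∀ y, bev P b y = 0 → bev P.derivative b y ≠ 0) :
    ∃ y, bev P a y = 0 := by
  let φ : (ℕ → ℝ) →+* Hy := Germ.coeRingHom _
  have hφ : Function.Surjective φ := Hy.exists_rep
  have hφX : Function.Surjective (mapRingHom φ) := Polynomial.map_surjective φ hφ
  obtain ⟨Q, hQP, -, hQ⟩ := Polynomial.lifts_and_degree_eq_and_monic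
    (f := mapRingHom φ) (p := P) (by
      rw [Polynomial.lifts_iff_set_range]
      exact Polynomial.map_surjective _ hφX P) hP
  let q : ℕ → ℝ[X][X] := fun n => Q.map (mapRingHom (Pi.evalRingHom _ n))
  have hqm : ∀ n, (q n).Monic := fun n => hQ.map _
  have hev : ∀ (b y : ℕ → ℝ) , bev P (φ b) (φ y) = φ (fun n => bev (q n) (b n) (y n)) := by
    intro b y
    rw [← hQP, ← bev_map]
    congr 1
    ext n
    exact bev_map (Pi.evalRingHom _ n) Q b y
  have hev' : ∀ (b y : ℕ → ℝ) , bev P.derivative (φ b) (φ y) =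
      φ (fun n => bev (q n).derivative (b n) (y n)) := by
    intro b y
    rw [← hQP, Polynomial.derivative_map, ← bev_map]
    congr 1
    ext n
    simp only [q, Polynomial.derivative_map]
    exact bev_map (Pi.evalRingHom _ n) Q.derivative b y
  obtain ⟨s, rfl⟩ := hφ s
  obtain ⟨a, rfl⟩ := hφ a
  obtain ⟨y, hy⟩ := hs
  obtain ⟨y, rfl⟩ := hφ y
  rw [hev, Hy.zero_iff] at hy
  by_contra hno
  have hno' : ∀ᶠ n in (hyperfilter ℕ : Filter ℕ), ¬ ∃ z, bev (q n) (a n) z = 0 := by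
    rw [Ultrafilter.eventually_not]
    intro hex
    have : ∀ n, ∃ z, (∃ z, bev (q n) (a n) z = 0) → bev (q n) (a n) z = 0 := by
      intro n
      by_cases h : ∃ z, bev (q n) (a n) z = 0
      · exact ⟨h.choose, fun _ => h.choose_spec⟩
      · exact ⟨0, fun h' => absurd h' h⟩
    choose z hz using this
    refine hno ⟨φ z, ?_⟩
    rw [hev, Hy.zero_iff]
    filter_upwards [hex] with n hn using hz n hn
  have hmain : ∀ n, ∃ b z, (bev (q n) (s n) (y n) = 0 ∧ ¬ ∃ z, bev (q n) (a n) z = 0) →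
      b ∈ Set.uIcc (s n) (a n) ∧ bev (q n) b z = 0 ∧ bev (q n).derivative b z = 0 := by
    intro n
    by_cases h : (bev (q n) (s n) (y n) = 0 ∧ ¬ ∃ z, bev (q n) (a n) z = 0)
    · obtain ⟨b, hb, z, hz⟩ := real_cont (q n) (hqm n) (s n) (a n) ⟨_, h.1⟩ h.2
      exact ⟨b, z, fun _ => ⟨hb, hz⟩⟩
    · exact ⟨0, 0, fun h' => absurd h' h⟩
  choose b z hbz using hmain
  have hall : ∀ᶠ n in (hyperfilter ℕ : Filter ℕ), b n ∈ Set.uIcc (s n) (a n) ∧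
      bev (q n) (b n) (z n) = 0 ∧ bev (q n).derivative (b n) (z n) = 0 := by
    filter_upwards [hy, hno'] with n h1 h2 using hbz n ⟨h1, h2⟩
  refine hd (φ b) ?_ (φ z) ?_ ?_
  · rw [Set.mem_uIcc]
    simp only [φ, Hy.le_iff]
    have : ∀ᶠ n in (hyperfilter ℕ : Filter ℕ),
      (s n ≤ b n ∧ b n ≤ a n) ∨ (a n ≤ b n ∧ b n ≤ s n) := by
      filter_upwards [hall] with n hn
      exact Set.mem_uIcc.1 hn.1
    rw [Ultrafilter.eventually_or] at this
    rcases this with h | h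
    · exact Or.inl (eventually_and.1 h)
    · exact Or.inr (eventually_and.1 h)
  · rw [hev, Hy.zero_iff]; exact hall.mono fun n hn => hn.2.1
  · rw [hev', Hy.zero_iff]; exact hall.mono fun n hn => hn.2.2

lemma prim_elt {R Ω ι : Type} [CommRing R] [IsDomain R] [Field Ω] [CharZero Ω]
    [Algebra R Ω] [FaithfulSMul R Ω] [Finite ι] (x : ι → Ω) (hx : ∀ i, IsAlgebraic R (x i)) :
    ∃ y : Ω, IsIntegral R y ∧ ∃ D : R, D ≠ 0 ∧ ∃ Q : ι → R[X],
      ∀ i, algebraMap R Ω D * x i = aeval y (Q i) := by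
  classical
  have := Fintype.ofFinite ι
  let _ := FractionRing.liftAlgebra R Ω
  have := FractionRing.isScalarTower_liftAlgebra R Ω
  have : CharZero (FractionRing R) := ⟨fun a b h => by
    have h2 := congrArg (algebraMap (FractionRing R) Ω) h
    have h3 : (a : Ω) = b := by simpa using h2
    exact Nat.cast_injective h3⟩
  let L := IntermediateField.adjoin (FractionRing R) (Set.range x)
  have hxK : ∀ i, IsIntegral (FractionRing R) (x i) := fun i =>
    ((IsFractionRing.isAlgebraic_iff R (FractionRing R) Ω).1 (hx i)).isIntegral
  have : FiniteDimensional (FractionRing R) L := IntermediateField.finiteDimensional_adjoin (by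
    rintro _ ⟨i, rfl⟩; exact hxK i)
  obtain ⟨y0, hy0⟩ := Field.exists_primitive_element (FractionRing R) L
  have hyalg : IsAlgebraic R (y0 : Ω) := (IsFractionRing.isAlgebraic_iff R (FractionRing R) Ω).2 (by
    have : IsAlgebraic (FractionRing R) y0 := Algebra.IsAlgebraic.isAlgebraic y0
    exact this.algebraMap)
  obtain ⟨r, hr0, hr⟩ := hyalg.exists_integral_multiple
  have hrΩ : algebraMap R Ω r ≠ 0 := by
    simpa using hr0
  have hq : ∀ i, ∃ q : (FractionRing R)[X], x i = aeval (r • (y0 : Ω)) q := by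
    intro i
    have hm : (⟨x i, IntermediateField.subset_adjoin _ _ ⟨i, rfl⟩⟩ : L) ∈ (⊤ : IntermediateField (FractionRing R) L) := trivial
    rw [← hy0, ← IntermediateField.mem_toSubalgebra,
      IntermediateField.adjoin_simple_toSubalgebra_of_isAlgebraic (Algebra.IsAlgebraic.isAlgebraic y0),
      Algebra.adjoin_singleton_eq_range_aeval] at hm
    obtain ⟨q, hq⟩ := hm
    have hq2 : aeval (y0 : Ω) q = x i := by
      have := congrArg (algebraMap L Ω) hq
      simpa [← aeval_algebraMap_apply] using this
    refine ⟨q.comp (C (algebraMap R (FractionRing R) r)⁻¹ * X), ?_⟩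
    rw [aeval_comp, ← hq2]
    congr 1
    simp only [map_mul, aeval_C, aeval_X, map_inv₀, ← IsScalarTower.algebraMap_apply]
    rw [Algebra.smul_def, ← mul_assoc, inv_mul_cancel₀ hrΩ, one_mul]
  choose q hq using hq
  have hD : ∀ i, ∃ d : R, d ≠ 0 ∧ ∃ Q : R[X], algebraMap R Ω d * x i = aeval (r • (y0 : Ω)) Q := by
    intro i
    obtain ⟨b, hbm, hb⟩ := IsLocalization.integerNormalization_spec (nonZeroDivisors R) (q i)
    refine ⟨b, nonZeroDivisors.ne_zero hbm,
      IsLocalization.integerNormalization (nonZeroDivisors R) (q i), ?_⟩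
    rw [← aeval_map_algebraMap (FractionRing R), hb, hq i, ← algebraMap_smul (FractionRing R) b (q i), map_smul,
      Algebra.smul_def (algebraMap R (FractionRing R) b), ← IsScalarTower.algebraMap_apply]
  choose d hd0 Q hQ using hD
  refine ⟨_, hr, ∏ i, d i, Finset.prod_ne_zero_iff.2 fun i _ => hd0 i,
    fun i => C (∏ j ∈ Finset.univ.erase i, d j) * Q i, fun i => ?_⟩
  rw [map_mul, aeval_C, ← hQ, ← mul_assoc, ← map_mul, Finset.prod_erase_mul _ _ (Finset.mem_univ i)]

lemma homog {E T ι : Type} [CommRing E] [CommRing T] (κ : E →+* T) (D : T) (Q : ι → T)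
    (f : MvPolynomial ι E) : ∃ (F : T) (N : ℕ), ∀ (Ω : Type) [Field Ω] (φ : T →+* Ω), φ D ≠ 0 →
      φ F = φ D ^ N * f.eval₂ (φ.comp κ) (fun i => φ (Q i) / φ D) := by
  induction f using MvPolynomial.induction_on with
  | C a => exact ⟨κ a, 0, fun Ω _ φ h => by simp⟩
  | add p q hp hq =>
    obtain ⟨F1, N1, h1⟩ := hp
    obtain ⟨F2, N2, h2⟩ := hq
    refine ⟨F1 * D ^ N2 + F2 * D ^ N1, N1 + N2, fun Ω _ φ h => ?_⟩
    rw [map_add, map_mul, map_mul, h1 Ω φ h, h2 Ω φ h, MvPolynomial.eval₂_add]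
    simp only [map_pow]
    ring
  | mul_X p i hp =>
    obtain ⟨F1, N1, h1⟩ := hp
    refine ⟨F1 * Q i, N1 + 1, fun Ω _ φ h => ?_⟩
    rw [map_mul, h1 Ω φ h, MvPolynomial.eval₂_mul, MvPolynomial.eval₂_X]
    field_simp
    ring

lemma pick_pt {E Ω : Type} [Field E] [Field Ω] [LinearOrder Ω] [IsStrictOrderedRing Ω]
    [Algebra E Ω] (hcl : ∀ y : Ω, IsAlgebraic E y → y ∈ Set.range (algebraMap E Ω))
    (s : Ω) (hs : Transcendental E s) (h : E[X]) (h0 : h ≠ 0) :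
    ∃ a : E, ∀ b ∈ Set.uIcc s (algebraMap E Ω a), aeval b h ≠ 0 := by
  classical
  have hm : h.map (algebraMap E Ω) ≠ 0 := by
    rwa [Ne, Polynomial.map_eq_zero]
  let S := (h.map (algebraMap E Ω)).roots.toFinset
  have hS : ∀ b, aeval b h = 0 ↔ b ∈ S := by
    intro b
    simp [S, hm, aeval_def, eval_map]
  have hSE : ∀ b ∈ S, ∃ e : E, algebraMap E Ω e = b := fun b hb => hcl b ⟨h, h0, (hS b).2 hb⟩
  have hsS : ∀ b ∈ S, b ≠ s := by
    rintro b hb rfl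
    exact hs ⟨h, h0, (hS b).2 hb⟩
  suffices H : ∃ a : E, (∀ r ∈ S, r < s → r < algebraMap E Ω a) ∧
      (∀ r ∈ S, s < r → algebraMap E Ω a < r) by
    obtain ⟨a, h1, h2⟩ := H
    refine ⟨a, fun b hb hb0 => ?_⟩
    have hbS := (hS b).1 hb0
    rw [Set.mem_uIcc] at hb
    rcases lt_or_gt_of_ne (hsS b hbS) with hlt | hlt
    · have := h1 b hbS hlt
      rcases hb with hb | hb
      · exact absurd hb.1 (not_le.2 hlt)
      · exact absurd hb.1 (not_le.2 this)
    · have := h2 b hbS hlt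
      rcases hb with hb | hb
      · exact absurd hb.2 (not_le.2 this)
      · exact absurd hb.2 (not_le.2 hlt)
  let A := S.filter (· < s)
  let B := S.filter (s < ·)
  by_cases hA : A.Nonempty
  · obtain ⟨l, hl, hlmax⟩ := A.exists_max_image id hA
    simp only [A, Finset.mem_filter, id] at hl hlmax
    obtain ⟨l', rfl⟩ := hSE l hl.1
    by_cases hB : B.Nonempty
    · obtain ⟨u, hu, humin⟩ := B.exists_min_image id hB
      simp only [B, Finset.mem_filter, id] at hu humin
      obtain ⟨u', rfl⟩ := hSE u hu.1
      refine ⟨(l' + u') / 2, fun r hr hrs => ?_, fun r hr hrs => ?_⟩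
      · have := hlmax r ⟨hr, hrs⟩
        rw [map_div₀, map_add, map_ofNat]
        linarith
      · have := humin r ⟨hr, hrs⟩
        rw [map_div₀, map_add, map_ofNat]
        linarith
    · refine ⟨l' + 1, fun r hr hrs => ?_, fun r hr hrs => ?_⟩
      · have := hlmax r ⟨hr, hrs⟩
        rw [map_add, map_one]
        linarith
      · exact absurd ⟨r, by simp [B, hr, hrs]⟩ hB
  · by_cases hB : B.Nonempty
    · obtain ⟨u, hu, humin⟩ := B.exists_min_image id hB
      simp only [B, Finset.mem_filter, id] at hu humin
      obtain ⟨u', rfl⟩ := hSE u hu.1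
      refine ⟨u' - 1, fun r hr hrs => ?_, fun r hr hrs => ?_⟩
      · exact absurd ⟨r, by simp [A, hr, hrs]⟩ hA
      · have := humin r ⟨hr, hrs⟩
        rw [map_sub, map_one]
        linarith
    · refine ⟨0, fun r hr hrs => ?_, fun r hr hrs => ?_⟩
      · exact absurd ⟨r, by simp [A, hr, hrs]⟩ hA
      · exact absurd ⟨r, by simp [B, hr, hrs]⟩ hB

lemma alg_step {E M ι : Type} [Field E] [Field M] [LinearOrder M] [IsStrictOrderedRing M]
    [Algebra E M] [Finite ι]
    (hRC : ∀ (P : M[X][X]), P.Monic → ∀ s a : M, (∃ y, bev P s y = 0) →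
      (∀ b ∈ Set.uIcc s a, ∀ y, bev P b y = 0 → bev P.derivative b y ≠ 0) → ∃ y, bev P a y = 0)
    (hcl : ∀ y : M, IsAlgebraic E y → y ∈ Set.range (algebraMap E M))
    (s : M) (hs : Transcendental E s) (x : ι → M)
    (hx : ∀ i, ∃ p : E[X][X], p ≠ 0 ∧ p.eval₂ (aeval s : E[X] →ₐ[E] M).toRingHom (x i) = 0) :
    ∃ x' : ι → E, ∀ f : MvPolynomial ι E, MvPolynomial.aeval x f = 0 →
      MvPolynomial.eval x' f = 0 := by
  let _ : Algebra E[X] M := (aeval s : E[X] →ₐ[E] M).toRingHom.toAlgebra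
  have hmap : ∀ p : E[X], algebraMap E[X] M p = aeval s p := fun p => rfl
  have hinj : Function.Injective (algebraMap E[X] M) := by
    rw [transcendental_iff_injective] at hs
    exact hs
  have : FaithfulSMul E[X] M := (faithfulSMul_iff_algebraMap_injective _ _).2 hinj
  obtain ⟨y, hy, D, hD0, Q, hQ⟩ := prim_elt (R := E[X]) x (fun i => hx i)
  obtain ⟨P, hP⟩ : ∃ P, P = minpoly E[X] y := ⟨_, rfl⟩
  have hPm : P.Monic := hP ▸ minpoly.monic hy
  have hPy : aeval y P = 0 := hP ▸ minpoly.aeval _ _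
  have hbev : ∀ (G : E[X][X]) (b z : M), G.eval₂ (eval₂RingHom (algebraMap E M) b) z =
      bev (G.map (mapRingHom (algebraMap E M))) b z := by
    intro G b z
    unfold bev
    rw [Polynomial.map_map, eval_map]
    congr 1
    ext <;> simp
  let φ : ∀ (b z : M), bev (P.map (mapRingHom (algebraMap E M))) b z = 0 → (AdjoinRoot P) →+* M :=
    fun b z h => AdjoinRoot.lift (eval₂RingHom (algebraMap E M) b) z (by rw [hbev]; exact h)
  have hbevs : ∀ (G : E[X][X]), bev (G.map (mapRingHom (algebraMap E M))) s y = aeval y G := by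
    intro G
    rw [← hbev]
    rfl
  have h0 : bev (P.map (mapRingHom (algebraMap E M))) s y = 0 := by rw [hbevs, hPy]
  have hφ0 : ∀ G : E[X][X], φ s y h0 (AdjoinRoot.mk P G) = aeval y G := by
    intro G
    exact AdjoinRoot.lift_mk _ _
  have hφinj : Function.Injective (φ s y h0) := by
    rw [injective_iff_map_eq_zero]
    intro t ht
    obtain ⟨G, rfl⟩ := AdjoinRoot.mk_surjective t
    rw [hφ0] at ht
    rw [AdjoinRoot.mk_eq_zero]
    rw [hP]
    exact minpoly.isIntegrallyClosed_dvd hy ht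
  have : IsDomain (AdjoinRoot P) := hφinj.isDomain (φ s y h0)
  have hallAlg : ∀ t : (AdjoinRoot P), IsAlgebraic E[X] t := by
    have := hPm.finite_adjoinRoot
    intro t
    exact (Algebra.IsIntegral.isIntegral (R := E[X]) t).isAlgebraic
  have hder : aeval y P.derivative ≠ 0 := by
    intro hz
    have hdeg : 0 < P.natDegree := hP ▸ minpoly.natDegree_pos hy
    have : CharZero E := by
      exact ⟨fun a b h => by
        have h2 := congrArg (algebraMap E M) h
        simp only [map_natCast] at h2
        exact Nat.cast_injective h2⟩
    have hne : P.derivative ≠ 0 := by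
      intro h
      have := derivative_eq_zero.1 h
      omega
    rw [hP] at hz hne
    have h1 := minpoly.IsIntegrallyClosed.degree_le_of_ne_zero hne hz
    exact absurd (Polynomial.degree_derivative_lt (minpoly.ne_zero hy)) (not_lt.2 h1)
  have hderT : AdjoinRoot.mk P P.derivative ≠ 0 := by
    intro h
    have := hφ0 P.derivative
    rw [h, map_zero] at this
    exact hder this.symm
  obtain ⟨h1, h10, hdvd⟩ := (hallAlg (AdjoinRoot.mk P P.derivative)).exists_nonzero_dvd
    (mem_nonZeroDivisors_of_ne_zero hderT)
  obtain ⟨a, ha⟩ := pick_pt hcl s hs (h1 * D) (mul_ne_zero h10 hD0)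
  have hφalg : ∀ b z h (p : E[X]), φ b z h (algebraMap E[X] (AdjoinRoot P) p) = aeval b p := by
    intro b z h p
    exact AdjoinRoot.lift_of _
  obtain ⟨z, hz⟩ := hRC (P.map (mapRingHom (algebraMap E M))) (hPm.map _) s (algebraMap E M a)
    ⟨y, h0⟩ (by
      intro b hb z hz hdz
      have hb' := ha b hb
      rw [map_mul] at hb'
      apply left_ne_zero_of_mul hb'
      obtain ⟨c, hc⟩ := hdvd
      rw [← hφalg b z hz, hc, map_mul]
      have : φ b z hz (AdjoinRoot.mk P P.derivative) = 0 := by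
        refine (AdjoinRoot.lift_mk _ _).trans ?_
        rw [hbev, ← Polynomial.derivative_map]
        exact hdz
      rw [this, zero_mul])
  have hza : eval₂ (algebraMap E M) z (P.map (evalRingHom a)) = 0 := by
    rw [← hz, ← hbev, eval₂_map]
    congr 1
    ext <;> simp
  obtain ⟨z', rfl⟩ := hcl z ⟨P.map (evalRingHom a), (hPm.map _).ne_zero, hza⟩
  have hz' : P.eval₂ (evalRingHom a) z' = 0 := by
    rw [← eval_map]
    rw [eval₂_at_apply] at hza
    simpa using hza
  let ψ : (AdjoinRoot P) →+* E := AdjoinRoot.lift (evalRingHom a) z' hz'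
  have hψD : ψ (AdjoinRoot.of P D) ≠ 0 := by
    have hh0 : ψ (AdjoinRoot.of P D) = D.eval a := AdjoinRoot.lift_of _
    rw [hh0]
    have := ha _ Set.right_mem_uIcc
    rw [map_mul] at this
    have := right_ne_zero_of_mul this
    rw [aeval_algebraMap_apply] at this
    intro hh
    apply this
    rw [coe_aeval_eq_eval]
    rw [hh, map_zero]
  have hφD : φ s y h0 (AdjoinRoot.of P D) ≠ 0 := by
    rw [← AdjoinRoot.algebraMap_eq, hφalg s y h0, ← hmap]
    simpa using hD0
  refine ⟨fun i => ψ (AdjoinRoot.mk P (Q i)) / ψ (AdjoinRoot.of P D), fun f hf => ?_⟩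
  obtain ⟨F, N, hF⟩ := homog ((AdjoinRoot.of P).comp C) (AdjoinRoot.of P D)
    (fun i => AdjoinRoot.mk P (Q i)) f
  have e1 := hF M (φ s y h0) hφD
  have ex : (fun i => φ s y h0 (AdjoinRoot.mk P (Q i)) / φ s y h0 (AdjoinRoot.of P D)) = x := by
    ext i
    rw [div_eq_iff hφD, hφ0, ← hQ, mul_comm]
    congr 1
    rw [← AdjoinRoot.algebraMap_eq, hφalg s y h0, ← hmap]
  have ec : (φ s y h0).comp ((AdjoinRoot.of P).comp C) = algebraMap E M := by
    ext e
    simp only [RingHom.comp_apply]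
    rw [← AdjoinRoot.algebraMap_eq, hφalg s y h0, aeval_C]
  rw [ex, ec] at e1
  rw [MvPolynomial.aeval_def] at hf
  rw [hf, mul_zero] at e1
  have hF0 : F = 0 := hφinj (by rw [e1, map_zero])
  have e2 := hF E ψ hψD
  rw [hF0, map_zero] at e2
  have e3 := (mul_eq_zero.1 e2.symm).resolve_left (pow_ne_zero _ hψD)
  have ec2 : ψ.comp ((AdjoinRoot.of P).comp C) = RingHom.id E := by
    ext e
    have : ψ (AdjoinRoot.of P (C e)) = (evalRingHom a) (C e) := AdjoinRoot.lift_of _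
    simp only [RingHom.comp_apply, RingHom.id_apply]
    rw [this]
    simp
  rw [ec2] at e3
  rw [MvPolynomial.eval, MvPolynomial.coe_eval₂Hom]
  exact e3

lemma alg_adjoin_simple {E M : Type} [Field E] [Field M] [Algebra E M] (s y : M)
    (hy : IsAlgebraic (IntermediateField.adjoin E {s}) y) :
    ∃ p : E[X][X], p ≠ 0 ∧ p.eval₂ (aeval s : E[X] →ₐ[E] M).toRingHom y = 0 := by
  open scoped IntermediateField.algebraAdjoinAdjoin in
  have h1 : IsAlgebraic (Algebra.adjoin E {s}) y :=
    (IsFractionRing.isAlgebraic_iff (Algebra.adjoin E {s}) (IntermediateField.adjoin E {s}) M).2 hy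
  obtain ⟨p, hp0, hp⟩ := h1
  have hmem : ∀ q : E[X], aeval s q ∈ Algebra.adjoin E {s} := fun q => by
    rw [Algebra.adjoin_singleton_eq_range_aeval]; exact ⟨q, rfl⟩
  let g : E[X] →ₐ[E] Algebra.adjoin E {s} := (aeval s : E[X] →ₐ[E] M).codRestrict _ hmem
  have hg : Function.Surjective g.toRingHom := by
    rintro ⟨z, hz⟩
    have hz2 := hz
    rw [Algebra.adjoin_singleton_eq_range_aeval] at hz2
    obtain ⟨q, hq⟩ := hz2
    exact ⟨q, Subtype.ext hq⟩
  obtain ⟨P, rfl⟩ := Polynomial.map_surjective _ hg p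
  refine ⟨P, fun h => hp0 (by rw [h, Polynomial.map_zero]), ?_⟩
  rw [aeval_def, eval₂_map] at hp
  exact hp

lemma chain_spec {M ι : Type} [Field M] [LinearOrder M] [IsStrictOrderedRing M] [Finite ι]
    (hRC : ∀ (P : M[X][X]), P.Monic → ∀ s a : M, (∃ y, bev P s y = 0) →
      (∀ b ∈ Set.uIcc s a, ∀ y, bev P b y = 0 → bev P.derivative b y ≠ 0) → ∃ y, bev P a y = 0)
    (T : List M) : ∀ (E : Type) [Field E] [Algebra E M]
    (_ : ∀ y : M, IsAlgebraic E y → y ∈ Set.range (algebraMap E M)) (x : ι → M)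
    (_ : ∀ i, x i ∈ T ∨ x i ∈ Set.range (algebraMap E M)),
    ∃ x' : ι → E, ∀ f : MvPolynomial ι E, MvPolynomial.aeval x f = 0 →
      MvPolynomial.eval x' f = 0 := by
  induction T with
  | nil =>
    intro E _ _ hcl x hx
    choose x' hx' using fun i => (hx i).resolve_left (by simp)
    refine ⟨x', fun f hf => ?_⟩
    have : x = fun i => algebraMap E M (x' i) := by ext i; rw [hx']
    rw [this] at hf
    apply (algebraMap E M).injective
    rw [map_zero, ← hf]
    exact (MvPolynomial.aeval_algebraMap_apply M x' f).symm
  | cons s T ih =>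
    intro E _ _ hcl x hx
    by_cases hs : IsAlgebraic E s
    · refine ih E hcl x fun i => ?_
      rcases hx i with h | h
      · rcases List.mem_cons.1 h with h | h
        · right; rw [h]; exact hcl s hs
        · left; exact h
      · right; exact h
    · obtain ⟨x1, hx1⟩ := ih (algebraicClosure (IntermediateField.adjoin E {s}) M) (by
        intro y hy
        have : y ∈ algebraicClosure (IntermediateField.adjoin E {s}) M := by
          rw [mem_algebraicClosure_iff]
          exact IsAlgebraic.restrictScalars _ hy
        exact ⟨⟨y, this⟩, rfl⟩) x (by
        intro i
        rcases hx i with h | h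
        · rcases List.mem_cons.1 h with h | h
          · right
            have : x i ∈ algebraicClosure (IntermediateField.adjoin E {s}) M := by
              rw [mem_algebraicClosure_iff, h]
              exact isAlgebraic_algebraMap
                (⟨s, IntermediateField.mem_adjoin_simple_self E s⟩ : IntermediateField.adjoin E {s})
            exact ⟨⟨x i, this⟩, rfl⟩
          · left; exact h
        · right
          obtain ⟨e, he⟩ := h
          exact ⟨algebraMap E _ e, by rw [← he]; rfl⟩)
      obtain ⟨x2, hx2⟩ := alg_step hRC hcl s hs (fun i => (x1 i : M)) (fun i =>
        alg_adjoin_simple s _ (mem_algebraicClosure_iff.1 (x1 i).2))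
      refine ⟨x2, fun f hf => hx2 f ?_⟩
      have : IsScalarTower E (algebraicClosure (IntermediateField.adjoin E {s}) M) M :=
        IsScalarTower.of_algebraMap_eq fun _ => rfl
      have h3 := hx1 (f.map (algebraMap E _)) (by
        rw [MvPolynomial.aeval_map_algebraMap]; exact hf)
      rw [MvPolynomial.eval_map] at h3
      have h4 := congrArg (algebraMap (algebraicClosure (IntermediateField.adjoin E {s}) M) M) h3
      rw [map_zero, MvPolynomial.eval₂_comp_left] at h4
      exact h4

/-- A family of real polynomials of bounded degree, with coefficients analytic at `0`. -/
structure AF (N : ℕ) (P : ℝ → ℝ[X]) : Prop where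
  deg : ∀ t, (P t).natDegree ≤ N
  an : ∀ j, AnalyticAt ℝ (fun t => (P t).coeff j) 0

lemma AF.eval_eq {N : ℕ} {P : ℝ → ℝ[X]} (h : AF N P) (t y : ℝ) :
    (P t).eval y = ∑ j ∈ Finset.range (N + 1), (P t).coeff j * y ^ j :=
  Polynomial.eval_eq_sum_range' (Nat.lt_succ_of_le (h.deg t)) y

lemma AF.analytic {N : ℕ} {P : ℝ → ℝ[X]} (h : AF N P) (y0 : ℝ) :
    AnalyticAt ℝ (fun x : ℝ × ℝ => (P x.1).eval x.2) (0, y0) := by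
  simp only [h.eval_eq]
  refine Finset.analyticAt_fun_sum _ fun j _ => ?_
  refine AnalyticAt.mul ?_ (analyticAt_snd.pow j)
  exact AnalyticAt.comp (g := fun t => (P t).coeff j) (f := Prod.fst) (h.an j) analyticAt_fst

lemma AF.tendsto {α : Type*} {l : Filter α} {N : ℕ} {P : ℝ → ℝ[X]} (h : AF N P) {τ y : α → ℝ} {y0 : ℝ}
    (hτ : Tendsto τ l (𝓝 0)) (hy : Tendsto y l (𝓝 y0)) :
    Tendsto (fun n => (P (τ n)).eval (y n)) l (𝓝 ((P 0).eval y0)) :=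
  (h.analytic y0).continuousAt.tendsto.comp (hτ.prodMk_nhds hy)

lemma AF.hasse {N : ℕ} {P : ℝ → ℝ[X]} (h : AF N P) (k : ℕ) :
    AF N (fun t => hasseDeriv k (P t)) := by
  refine ⟨fun t => (natDegree_hasseDeriv_le _ _).trans ((Nat.sub_le _ _).trans (h.deg t)), fun j => ?_⟩
  simp only [hasseDeriv_coeff]
  exact analyticAt_const.mul (h.an _)

lemma AF.taylor {N : ℕ} {P : ℝ → ℝ[X]} (h : AF N P) {η : ℝ → ℝ} (hη : AnalyticAt ℝ η 0) :
    AF N (fun t => Polynomial.taylor (η t) (P t)) := by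
  refine ⟨fun t => by rw [natDegree_taylor]; exact h.deg t, fun j => ?_⟩
  simp only [taylor_coeff]
  exact AnalyticAt.comp (g := fun x : ℝ × ℝ => (hasseDeriv j (P x.1)).eval x.2)
    (f := fun t => (t, η t)) ((h.hasse j).analytic _) (analyticAt_id.prod hη)

lemma AF.shift {N : ℕ} {P : ℝ → ℝ[X]} (h : AF N P) {k : ℕ} (hk : 0 < k)
    (h0 : ∀ j < k, (P 0).coeff j = 0) (h1 : (P 0).coeff k ≠ 0) :
    ∃ η : ℝ → ℝ, AnalyticAt ℝ η 0 ∧ η 0 = 0 ∧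
      ∀ᶠ t in 𝓝 0, (Polynomial.taylor (η t) (P t)).coeff (k - 1) = 0 := by
  have hQ := h.hasse (k - 1)
  let f : ℝ × ℝ → ℝ := fun x => (hasseDeriv (k - 1) (P x.1)).eval x.2
  have hf : AnalyticAt ℝ f (0, 0) := hQ.analytic 0
  have cdf : ContDiffAt ℝ ⊤ f (0, 0) := hf.contDiffAt
  have hder : HasDerivAt (fun y => f (0, y)) (k * (P 0).coeff k) 0 := by
    have := Polynomial.hasDerivAt (hasseDeriv (k - 1) (P 0)) 0
    have e0 : (derivative (hasseDeriv (k - 1) (P 0))).eval 0 = k * (P 0).coeff k := ?_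
    · rw [e0] at this
      exact this
    rw [← coeff_zero_eq_eval_zero, coeff_derivative, hasseDeriv_coeff]
    have e : 0 + 1 + (k - 1) = k := by omega
    rw [e, ← Nat.choose_symm (by omega : k - 1 ≤ k)]
    have e2 : k - (k - 1) = 1 := by omega
    rw [e2]
    simp
  have if₂ : ((fderiv ℝ f (0, 0)) ∘L ContinuousLinearMap.inr ℝ ℝ ℝ).IsInvertible := by
    have hc : HasDerivAt (fun y => f (0, y))
        (((fderiv ℝ f (0, 0)) ∘L ContinuousLinearMap.inr ℝ ℝ ℝ) 1) 0 := by
      have h2 : HasFDerivAt f (fderiv ℝ f (0, 0)) ((fun y : ℝ => ((0 : ℝ), y)) 0) :=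
        hf.differentiableAt.hasFDerivAt
      have h3 : HasDerivAt (fun y : ℝ => ((0 : ℝ), y)) ((0 : ℝ), (1 : ℝ)) 0 :=
        (hasDerivAt_const _ _).prodMk (hasDerivAt_id _)
      exact h2.comp_hasDerivAt (0 : ℝ) h3
    have hne : ((fderiv ℝ f (0, 0)) ∘L ContinuousLinearMap.inr ℝ ℝ ℝ) 1 ≠ 0 := by
      rw [hc.unique hder]
      exact mul_ne_zero (by exact_mod_cast hk.ne') h1
    refine ⟨ContinuousLinearEquiv.unitsEquivAut ℝ (Units.mk0 _ hne), ?_⟩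
    ext
    simp
  refine ⟨cdf.implicitFunction (by simp) if₂, ?_, ?_, ?_⟩
  · exact (cdf.contDiffAt_implicitFunction (by simp) if₂).analyticAt
  · have := cdf.implicitFunction_apply_self (by simp) if₂
    exact this
  · have := cdf.eventually_apply_implicitFunction (by simp) if₂
    filter_upwards [this] with t ht
    rw [taylor_coeff]
    have e : f (0, 0) = 0 := by
      simp only [f]
      rw [← coeff_zero_eq_eval_zero, hasseDeriv_coeff, h0 _ (by omega), mul_zero]
    rw [e] at ht
    exact ht

lemma tendsto_pow_zero {q : ℕ} (hq : 0 < q) : Tendsto (fun σ : ℝ => σ ^ q) (𝓝 0) (𝓝 0) := by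
  have : Continuous fun σ : ℝ => σ ^ q := by fun_prop
  have h := this.tendsto 0
  simpa [hq.ne'] using h

lemma analyticAt_comp_pow {f : ℝ → ℝ} (hf : AnalyticAt ℝ f 0) {q : ℕ} (hq : 0 < q) :
    AnalyticAt ℝ (fun σ => f (σ ^ q)) 0 := by
  have h1 : AnalyticAt ℝ (fun σ : ℝ => σ ^ q) 0 := analyticAt_id.pow q
  refine AnalyticAt.comp (g := f) (f := fun σ : ℝ => σ ^ q) ?_ h1
  simpa [hq.ne'] using hf

lemma AF.scale {N : ℕ} {P : ℝ → ℝ[X]} (h : AF N P) {k : ℕ} (hk : 0 < k)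
    (h0 : ∀ j < k, (P 0).coeff j = 0)
    (hv : ∀ᶠ t in 𝓝 0, (P t).coeff (k - 1) = 0) :
    (∀ j < k, ∀ᶠ t in 𝓝 0, (P t).coeff j = 0) ∨
    ∃ q > 0, ∃ p > 0, ∃ c : ℕ → ℝ → ℝ, (∀ j, AnalyticAt ℝ (c j) 0) ∧
      (∀ j, ∀ᶠ σ in 𝓝 0, (P (σ ^ q)).coeff j * (σ ^ p) ^ j = (σ ^ p) ^ k * c j σ) ∧
      (∀ j ≥ k, ∀ σ, c j σ = (P (σ ^ q)).coeff j * (σ ^ p) ^ (j - k)) ∧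
      (∃ j < k, c j 0 ≠ 0) ∧ c (k - 1) 0 = 0 := by
  classical
  by_cases hall : ∀ j < k, ∀ᶠ t in 𝓝 0, (P t).coeff j = 0
  · exact Or.inl hall
  right
  have hord : ∀ j, ∃ m : ℕ, ∃ b : ℝ → ℝ, AnalyticAt ℝ b 0 ∧
      (¬ (∀ᶠ t in 𝓝 0, (P t).coeff j = 0) → b 0 ≠ 0 ∧
        ∀ᶠ t in 𝓝 0, (P t).coeff j = t ^ m * b t) := by
    intro j
    by_cases hj : ∀ᶠ t in 𝓝 0, (P t).coeff j = 0
    · exact ⟨0, 0, analyticAt_const, fun h => absurd hj h⟩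
    · obtain ⟨n, g, hg, hg0, hgf⟩ := (h.an j).exists_eventuallyEq_pow_smul_nonzero_iff.2 hj
      refine ⟨n, g, hg, fun _ => ⟨hg0, ?_⟩⟩
      simpa using hgf
  choose m b hb hbm using hord
  simp only [not_forall] at hall
  obtain ⟨j1, hj1k, hj1⟩ := hall
  let S := (Finset.range k).filter fun j => ¬ ∀ᶠ t in 𝓝 0, (P t).coeff j = 0
  obtain ⟨j0, hj0S, hmin⟩ := S.exists_min_image (fun j => (m j : ℚ) / ((k : ℚ) - j))
    ⟨j1, by simp only [S, Finset.mem_filter, Finset.mem_range]; exact ⟨hj1k, hj1⟩⟩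
  simp only [S, Finset.mem_filter, Finset.mem_range] at hj0S hmin
  obtain ⟨hj0k, hj0⟩ := hj0S
  have hmin2 : ∀ j < k, ¬ (∀ᶠ t in 𝓝 0, (P t).coeff j = 0) →
      m j0 * (k - j) ≤ m j * (k - j0) := by
    intro j hj hjS
    have h1 := hmin j ⟨hj, hjS⟩
    have hj' : (j : ℚ) < k := by exact_mod_cast hj
    have hj0' : (j0 : ℚ) < k := by exact_mod_cast hj0k
    rw [div_le_div_iff₀ (by linarith) (by linarith)] at h1
    rw [← Nat.cast_sub hj.le, ← Nat.cast_sub hj0k.le] at h1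
    exact_mod_cast h1
  have hp : 0 < m j0 := by
    rcases Nat.eq_zero_or_pos (m j0) with h2 | h2
    · exfalso
      have h3 := (hbm j0 hj0).2.self_of_nhds
      rw [h0 j0 hj0k, h2] at h3
      apply (hbm j0 hj0).1
      simpa using h3.symm
    · exact h2
  have hq : 0 < k - j0 := by omega
  refine ⟨k - j0, hq, m j0, hp, fun j => if k ≤ j then
      fun σ => (P (σ ^ (k - j0))).coeff j * (σ ^ (m j0)) ^ (j - k)
    else if ∀ᶠ t in 𝓝 0, (P t).coeff j = 0 then 0
    else fun σ => σ ^ (m j * (k - j0) - m j0 * (k - j)) * b j (σ ^ (k - j0)), ?_, ?_, ?_, ?_, ?_⟩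
  · intro j
    dsimp only
    split_ifs with h1 h2
    · exact (analyticAt_comp_pow (h.an j) hq).mul ((analyticAt_id.pow _).pow _)
    · exact analyticAt_const
    · exact (analyticAt_id.pow _).mul (analyticAt_comp_pow (hb j) hq)
  · intro j
    dsimp only
    split_ifs with h1 h2
    · refine Eventually.of_forall fun σ => ?_
      have : (σ ^ m j0) ^ j = (σ ^ m j0) ^ k * (σ ^ m j0) ^ (j - k) := by
        rw [← pow_add]; congr 1; omega
      rw [this]; ring
    · filter_upwards [(tendsto_pow_zero hq).eventually h2] with σ hσ
      rw [hσ]; simp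
    · filter_upwards [(tendsto_pow_zero hq).eventually (hbm j h2).2] with σ hσ
      rw [hσ]
      have hle := hmin2 j (by omega) h2
      have : (σ ^ (k - j0)) ^ m j * (σ ^ m j0) ^ j =
        (σ ^ m j0) ^ k * σ ^ (m j * (k - j0) - m j0 * (k - j)) := by
        rw [← pow_mul, ← pow_mul, ← pow_mul, ← pow_add, ← pow_add]
        congr 1
        have e : m j0 * k = m j0 * (k - j) + m j0 * j := by
          rw [← mul_add]; congr 1; omega
        rw [e, mul_comm (k - j0) (m j)]
        omega
      calc _ = (σ ^ (k - j0)) ^ m j * (σ ^ m j0) ^ j * b j (σ ^ (k - j0)) := by ring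
        _ = _ := by rw [this]; ring
  · intro j hj σ
    dsimp only
    rw [if_pos hj]
  · refine ⟨j0, hj0k, ?_⟩
    dsimp only
    rw [if_neg (by omega), if_neg hj0]
    rw [Nat.sub_self, pow_zero, one_mul, zero_pow hq.ne']
    exact (hbm j0 hj0).1
  · dsimp only
    rw [if_neg (by omega), if_pos hv]
    rfl

lemma mult_lt (R : ℝ[X]) {k : ℕ} (hk : 0 < k) (hgt : ∀ j > k, R.coeff j = 0)
    (hj0 : ∃ j < k, R.coeff j ≠ 0) (h1 : R.coeff (k - 1) = 0) (w : ℝ) (hk0 : R.coeff k ≠ 0) :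
    ∃ k' < k, (∀ j < k', (taylor w R).coeff j = 0) ∧ (taylor w R).coeff k' ≠ 0 := by
  classical
  by_cases hex : ∃ k', k' < k ∧ (taylor w R).coeff k' ≠ 0
  · refine ⟨Nat.find hex, (Nat.find_spec hex).1, fun j hj => ?_, (Nat.find_spec hex).2⟩
    by_contra hne
    exact Nat.find_min hex hj ⟨hj.trans (Nat.find_spec hex).1, hne⟩
  exfalso
  push Not at hex
  have hdeg : R.natDegree ≤ k := natDegree_le_iff_coeff_eq_zero.2 hgt
  obtain ⟨a, ha⟩ : ∃ a, taylor w R = C a * X ^ k := by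
    refine ⟨(taylor w R).coeff k, ?_⟩
    ext j
    rw [coeff_C_mul_X_pow]
    split_ifs with h
    · rw [h]
    · rcases lt_or_gt_of_ne h with h | h
      · exact hex j h
      · exact coeff_eq_zero_of_natDegree_lt (by rw [natDegree_taylor]; omega)
  have hR : R = C a * (X + C (-w)) ^ k := by
    have h2 := congrArg (taylor (-w)) ha
    rw [taylor_taylor] at h2
    simpa [taylor_apply] using h2
  have ha0 : a ≠ 0 := by
    rintro rfl
    rw [hR] at hk0
    simp at hk0
  have hw : w = 0 := by
    rw [hR, coeff_C_mul, coeff_X_add_C_pow] at h1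
    have e : k - (k - 1) = 1 := by omega
    rw [e, ← Nat.choose_symm (by omega : k - 1 ≤ k), e] at h1
    simp only [pow_one, Nat.choose_one_right] at h1
    have : (k : ℝ) ≠ 0 := by exact_mod_cast hk.ne'
    simpa [ha0, this] using h1
  obtain ⟨j, hj, hjne⟩ := hj0
  apply hjne
  rw [hR, hw]
  simp only [neg_zero, C_0, add_zero]
  rw [coeff_C_mul_X_pow, if_neg hj.ne]

lemma ultra_lim {α : Type*} (u : Ultrafilter α) (w : α → ℝ) (B : ℝ) (h : ∀ᶠ n in (u : Filter α), |w n| ≤ B) :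
    ∃ w0, Tendsto w u (𝓝 w0) := by
  obtain ⟨w0, -, hw0⟩ := (isCompact_Icc (a := -B) (b := B)).ultrafilter_le_nhds (u.map w) (by
    rw [Ultrafilter.coe_map, le_principal_iff, mem_map]
    filter_upwards [h] with n hn
    exact abs_le.1 hn)
  exact ⟨w0, hw0⟩

lemma root_bdd {u : Ultrafilter ℕ} {N k p : ℕ} {c : ℕ → ℝ → ℝ} {σ y w : ℕ → ℝ} {a : ℕ → ℕ → ℝ} {a0 : ℕ → ℝ}
    (hkN : k ≤ N)
    (hc : ∀ j, AnalyticAt ℝ (c j) 0) (hσ : Tendsto σ u (𝓝 0)) (hy : Tendsto y u (𝓝 0))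
    (hw : ∀ᶠ n in (u : Filter ℕ), (σ n) ^ p * w n = y n)
    (ha : ∀ j, Tendsto (a j) u (𝓝 (a0 j))) (hak : a0 k ≠ 0)
    (hck : ∀ j ≥ k, ∀ᶠ n in (u : Filter ℕ), c j (σ n) = a j n * (σ n ^ p) ^ (j - k))
    (heq : ∀ᶠ n in (u : Filter ℕ), ∑ j ∈ Finset.range (N + 1), c j (σ n) * w n ^ j = 0) :
    ∃ w0, Tendsto w u (𝓝 w0) := by
  by_cases hb : ∃ B, ∀ᶠ n in (u : Filter ℕ), |w n| ≤ B
  · obtain ⟨B, hB⟩ := hb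
    exact ultra_lim u w B hB
  exfalso
  have hinf : Tendsto (fun n => |w n|) u atTop := by
    rw [tendsto_atTop]
    intro B
    have : ¬ ∀ᶠ n in (u : Filter ℕ), |w n| ≤ B := fun h => hb ⟨B, h⟩
    rw [← Ultrafilter.eventually_not] at this
    filter_upwards [this] with n hn
    exact (not_le.1 hn).le
  have hv : Tendsto (fun n => (w n)⁻¹) u (𝓝 0) := by
    rw [tendsto_zero_iff_abs_tendsto_zero]
    have := hinf.inv_tendsto_atTop
    refine this.congr fun n => ?_
    simp [abs_inv]
  have hw0 : ∀ᶠ n in (u : Filter ℕ), w n ≠ 0 := by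
    filter_upwards [hinf.eventually_gt_atTop 0] with n hn
    exact abs_pos.1 hn
  have hlim : ∀ j ∈ Finset.range (N + 1), Tendsto (fun n => c j (σ n) * w n ^ j * (w n)⁻¹ ^ k) u
      (𝓝 (if j = k then a0 k else 0)) := by
    intro j _
    rcases lt_or_ge j k with hj | hj
    · rw [if_neg hj.ne]
      have h1 : Tendsto (fun n => c j (σ n) * (w n)⁻¹ ^ (k - j)) u (𝓝 (c j 0 * 0 ^ (k - j))) :=
        ((hc j).continuousAt.tendsto.comp hσ).mul (hv.pow _)
      rw [zero_pow (by omega), mul_zero] at h1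
      refine h1.congr' ?_
      filter_upwards [hw0] with n hn
      have e : (w n)⁻¹ ^ k = (w n)⁻¹ ^ (k - j) * (w n)⁻¹ ^ j := by
        rw [← pow_add]; congr 1; omega
      have e2 : w n ^ j * (w n)⁻¹ ^ j = 1 := by
        rw [← mul_pow, mul_inv_cancel₀ hn, one_pow]
      calc _ = c j (σ n) * (w n)⁻¹ ^ (k - j) * (w n ^ j * (w n)⁻¹ ^ j) := by rw [e2, mul_one]
        _ = _ := by rw [e]; ring
    · have h1 : Tendsto (fun n => a j n * y n ^ (j - k)) u (𝓝 (a0 j * 0 ^ (j - k))) :=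
        (ha j).mul (hy.pow _)
      have e0 : a0 j * 0 ^ (j - k) = if j = k then a0 k else 0 := by
        split_ifs with h
        · subst h; simp
        · rw [zero_pow (by omega), mul_zero]
      rw [e0] at h1
      refine h1.congr' ?_
      filter_upwards [hw0, hw, hck j hj] with n hn hwn hcn
      rw [hcn, ← hwn, mul_pow]
      have e : w n ^ j = w n ^ (j - k) * w n ^ k := by
        rw [← pow_add]; congr 1; omega
      have e2 : w n ^ k * (w n)⁻¹ ^ k = 1 := by
        rw [← mul_pow, mul_inv_cancel₀ hn, one_pow]
      calc _ = a j n * ((σ n ^ p) ^ (j - k) * w n ^ (j - k)) * (w n ^ k * (w n)⁻¹ ^ k) := by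
            rw [e2, mul_one]
        _ = _ := by rw [e]; ring
  have hs := tendsto_finsetSum _ hlim
  rw [Finset.sum_ite_eq' _ k, if_pos (by simpa using Nat.lt_succ_of_le hkN)] at hs
  apply hak
  refine tendsto_nhds_unique hs (tendsto_const_nhds.congr' ?_)
  filter_upwards [heq] with n hn
  rw [← Finset.sum_mul, hn, zero_mul]

lemma puis_concl_comp {x : ℝ} (hx : 0 < x) (q l : ℕ) :
    (x ^ ((q : ℝ)⁻¹)) ^ ((l : ℝ)⁻¹) = x ^ (((q * l : ℕ) : ℝ)⁻¹) := by
  rw [← Real.rpow_mul hx.le]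
  congr 1
  push_cast
  rw [mul_inv]

/-- Conclusion of Puiseux's theorem along an ultrafilter. -/
def PuisSer (u : Ultrafilter ℕ) (τ y : ℕ → ℝ) : Prop :=
  ∃ l : ℕ, 0 < l ∧ ∃ φ : ℝ → ℝ, AnalyticAt ℝ φ 0 ∧ ∀ᶠ n in (u : Filter ℕ), y n = φ (τ n ^ ((l : ℝ)⁻¹))

lemma puis_newton (u : Ultrafilter ℕ) (k : ℕ) (hk : 0 < k)
    (ih : ∀ k' < k, ∀ (N : ℕ) (P : ℝ → ℝ[X]), AF N P → (∀ j < k', (P 0).coeff j = 0) →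
      (P 0).coeff k' ≠ 0 → ∀ τ y : ℕ → ℝ, (∀ᶠ n in (u : Filter ℕ), 0 < τ n) → Tendsto τ u (𝓝 0) →
      Tendsto y u (𝓝 0) → (∀ᶠ n in (u : Filter ℕ), (P (τ n)).eval (y n) = 0) → PuisSer u τ y)
    (N : ℕ) (P : ℝ → ℝ[X]) (h : AF N P) (h0 : ∀ j < k, (P 0).coeff j = 0)
    (h1 : (P 0).coeff k ≠ 0) (hv : ∀ᶠ t in 𝓝 0, (P t).coeff (k - 1) = 0)
    (τ y : ℕ → ℝ) (hpos : ∀ᶠ n in (u : Filter ℕ), 0 < τ n) (hτ : Tendsto τ u (𝓝 0))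
    (hy : Tendsto y u (𝓝 0)) (hPy : ∀ᶠ n in (u : Filter ℕ), (P (τ n)).eval (y n) = 0) :
    PuisSer u τ y := by
  have hkN : k ≤ N := by
    by_contra hlt
    exact h1 (coeff_eq_zero_of_natDegree_lt ((h.deg 0).trans_lt (not_le.1 hlt)))
  rcases h.scale hk h0 hv with hz | ⟨q, hq, p, hp, c, hc, hcid, hck, hcj, hck1⟩
  · refine ⟨1, one_pos, fun _ => 0, analyticAt_const, ?_⟩
    have hz2 : ∀ᶠ t in 𝓝 0, ∀ j ∈ Finset.range k, (P t).coeff j = 0 := by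
      rw [Filter.eventually_all_finset]
      intro j hj
      exact hz j (Finset.mem_range.1 hj)
    let g : ℕ → ℝ := fun n => ∑ i ∈ Finset.range (N + 1 - k), (P (τ n)).coeff (k + i) * y n ^ i
    have hg : Tendsto g u (𝓝 ((P 0).coeff k)) := by
      have : Tendsto g u (𝓝 (∑ i ∈ Finset.range (N + 1 - k), (P 0).coeff (k + i) * 0 ^ i)) :=
        tendsto_finsetSum _ fun i _ => ((h.an _).continuousAt.tendsto.comp hτ).mul (hy.pow i)
      convert this using 2
      rw [Finset.sum_eq_single 0]
      · simp
      · intro i _ hi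
        rw [zero_pow hi, mul_zero]
      · intro hh
        exfalso; apply hh
        rw [Finset.mem_range]; omega
    filter_upwards [hg.eventually_ne h1, hPy, hτ.eventually hz2] with n hgn hPn hzn
    rw [h.eval_eq] at hPn
    have e : N + 1 = k + (N + 1 - k) := by omega
    rw [e, Finset.sum_range_add, Finset.sum_eq_zero (fun j hj => by rw [hzn j hj, zero_mul]),
      zero_add] at hPn
    have e3 : y n ^ k * g n = 0 := by
      rw [← hPn, Finset.mul_sum]
      refine Finset.sum_congr rfl fun i _ => ?_
      rw [pow_add]; ring
    exact eq_zero_of_pow_eq_zero ((mul_eq_zero.1 e3).resolve_right hgn)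
  let σ : ℕ → ℝ := fun n => τ n ^ ((q : ℝ)⁻¹)
  have hσpos : ∀ᶠ n in (u : Filter ℕ), 0 < σ n := by
    filter_upwards [hpos] with n hn
    exact Real.rpow_pos_of_pos hn _
  have hσq : ∀ᶠ n in (u : Filter ℕ), σ n ^ q = τ n := by
    filter_upwards [hpos] with n hn
    exact Real.rpow_inv_natCast_pow hn.le hq.ne'
  have hσ : Tendsto σ u (𝓝 0) := by
    have h2 : (0 : ℝ) < (q : ℝ)⁻¹ := by positivity
    have := hτ.rpow_const (p := (q : ℝ)⁻¹) (Or.inr h2.le)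
    rwa [Real.zero_rpow h2.ne'] at this
  let w : ℕ → ℝ := fun n => y n / σ n ^ p
  have hw : ∀ᶠ n in (u : Filter ℕ), σ n ^ p * w n = y n := by
    filter_upwards [hσpos] with n hn
    exact mul_div_cancel₀ _ (pow_pos hn p).ne'
  have hcid2 : ∀ᶠ σ in 𝓝 0, ∀ j ∈ Finset.range (N + 1),
      (P (σ ^ q)).coeff j * (σ ^ p) ^ j = (σ ^ p) ^ k * c j σ := by
    rw [Filter.eventually_all_finset]
    intro j _
    exact hcid j
  have heq : ∀ᶠ n in (u : Filter ℕ), ∑ j ∈ Finset.range (N + 1), c j (σ n) * w n ^ j = 0 := by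
    filter_upwards [hσpos, hσq, hw, hPy, hσ.eventually hcid2] with n hn hqn hwn hPn hcn
    rw [h.eval_eq, ← hqn, ← hwn] at hPn
    have e : (σ n ^ p) ^ k * ∑ j ∈ Finset.range (N + 1), c j (σ n) * w n ^ j = 0 := by
      rw [← hPn, Finset.mul_sum]
      refine Finset.sum_congr rfl fun j hj => ?_
      rw [← mul_assoc, ← hcn j hj]; ring
    exact (mul_eq_zero.1 e).resolve_left (pow_pos (pow_pos hn p) k).ne'
  obtain ⟨w0, hw0⟩ : ∃ w0, Tendsto w u (𝓝 w0) :=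
    root_bdd (a := fun j n => (P (τ n)).coeff j) (a0 := fun j => (P 0).coeff j) hkN hc hσ hy hw
      (fun j => (h.an j).continuousAt.tendsto.comp hτ) h1
      (fun j hj => by
        filter_upwards [hσq] with n hn
        rw [hck j hj, hn]) heq
  let R : ℝ → ℝ[X] := fun σ => ∑ j ∈ Finset.range (N + 1), C (c j σ) * X ^ j
  have hRc : ∀ σ j, (R σ).coeff j = if j < N + 1 then c j σ else 0 := by
    intro σ j
    simp only [R, finsetSum_coeff, coeff_C_mul_X_pow]
    rw [Finset.sum_ite_eq]
    simp
  have hR : AF N R := by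
    refine ⟨fun t => ?_, fun j => ?_⟩
    · rw [natDegree_le_iff_coeff_eq_zero]
      intro j hj
      rw [hRc, if_neg (by omega)]
    · simp only [hRc]
      split_ifs
      · exact hc j
      · exact analyticAt_const
  have hRe : ∀ᶠ n in (u : Filter ℕ), (R (σ n)).eval (w n) = 0 := by
    filter_upwards [heq] with n hn
    simp only [R, eval_finsetSum, eval_mul, eval_C, eval_pow, eval_X]
    exact hn
  obtain ⟨k', hk', hk'1, hk'2⟩ := mult_lt (R 0) hk (by
      intro j hj
      rw [hRc]
      split_ifs
      · rw [hck j (le_of_lt hj), zero_pow hp.ne', zero_pow (by omega : j - k ≠ 0), mul_zero]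
      · rfl) (by
      obtain ⟨j, hj, hj2⟩ := hcj
      refine ⟨j, hj, ?_⟩
      rwa [hRc, if_pos (by omega)]) (by
      rw [hRc, if_pos (by omega), hck1]) w0 (by
      rw [hRc, if_pos (by omega), hck k le_rfl, zero_pow hq.ne']
      simpa using h1)
  obtain ⟨l, hl, φ, hφ, hφy⟩ := ih k' hk' N (fun t => taylor w0 (R t))
    (hR.taylor (η := fun _ => w0) analyticAt_const) hk'1 hk'2 σ (fun n => w n - w0) hσpos hσ
    (by simpa using hw0.sub_const w0) (by
      filter_upwards [hRe] with n hn
      rw [taylor_eval, sub_add_cancel]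
      exact hn)
  refine ⟨q * l, Nat.mul_pos hq hl, fun t => (t ^ l) ^ p * (w0 + φ t), ?_, ?_⟩
  · exact ((analyticAt_id.pow l).pow p).mul (analyticAt_const.add hφ)
  · filter_upwards [hpos, hσpos, hw, hφy] with n hn hσn hwn hφn
    rw [← puis_concl_comp hn q l]
    change y n = ((σ n ^ ((l : ℝ)⁻¹)) ^ l) ^ p * (w0 + φ (σ n ^ ((l : ℝ)⁻¹)))
    rw [Real.rpow_inv_natCast_pow hσn.le hl.ne', ← hφn, ← hwn]
    ring

theorem puiseux (u : Ultrafilter ℕ) (k : ℕ) : ∀ (N : ℕ) (P : ℝ → ℝ[X]), AF N P →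
      (∀ j < k, (P 0).coeff j = 0) →
      (P 0).coeff k ≠ 0 → ∀ τ y : ℕ → ℝ, (∀ᶠ n in (u : Filter ℕ), 0 < τ n) → Tendsto τ u (𝓝 0) →
      Tendsto y u (𝓝 0) → (∀ᶠ n in (u : Filter ℕ), (P (τ n)).eval (y n) = 0) → PuisSer u τ y := by
  induction k using Nat.strong_induction_on with
  | _ k ih =>
    intro N P h h0 h1 τ y hpos hτ hy hPy
    rcases Nat.eq_zero_or_pos k with rfl | hk
    · exfalso
      apply h1
      rw [coeff_zero_eq_eval_zero]
      refine tendsto_nhds_unique (h.tendsto hτ hy) (tendsto_const_nhds.congr' ?_)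
      filter_upwards [hPy] with n hn
      exact hn.symm
    · obtain ⟨η, hη, hη0, hηk⟩ := h.shift hk h0 h1
      have hητ : Tendsto (fun n => η (τ n)) u (𝓝 0) := by
        have := hη.continuousAt.tendsto.comp hτ
        rwa [hη0] at this
      have hT0 : taylor (η 0) (P 0) = P 0 := by rw [hη0, taylor_zero]
      obtain ⟨l, hl, φ, hφ, hφy⟩ := puis_newton u k hk ih N (fun t => taylor (η t) (P t))
        (h.taylor hη) (by simpa only [hT0] using h0) (by simpa only [hT0] using h1) hηk τ
        (fun n => y n - η (τ n)) hpos hτ (by simpa using hy.sub hητ) (by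
          filter_upwards [hPy] with n hn
          rw [taylor_eval, sub_add_cancel]
          exact hn)
      refine ⟨l, hl, fun t => η (t ^ l) + φ t, (analyticAt_comp_pow hη hl).add hφ, ?_⟩
      filter_upwards [hpos, hφy] with n hn hφn
      rw [Real.rpow_inv_natCast_pow hn.le hl.ne', ← hφn]
      ring

lemma puiseux_start (u : Ultrafilter ℕ) (P : ℝ[X][X]) (hP : P ≠ 0) (τ y : ℕ → ℝ)
    (hpos : ∀ᶠ n in (u : Filter ℕ), 0 < τ n) (hτ : Tendsto τ u (𝓝 0))
    (hy : Tendsto y u (𝓝 0)) (hPy : ∀ᶠ n in (u : Filter ℕ), bev P (τ n) (y n) = 0) :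
    PuisSer u τ y := by
  classical
  have hnu : ¬ IsUnit (C X : ℝ[X][X]) := by
    rw [isUnit_C]
    exact not_isUnit_X
  obtain ⟨Q, hQ, hnd⟩ := (FiniteMultiplicity.of_not_isUnit hnu hP).exists_eq_pow_mul_and_not_dvd
  rw [C_dvd_iff_dvd_coeff, not_forall] at hnd
  simp only [X_dvd_iff, coeff_zero_eq_eval_zero] at hnd
  have hc : ∀ t j, (Q.map (evalRingHom t)).coeff j = (Q.coeff j).eval t := by
    intro t j
    rw [coeff_map]; rfl
  refine puiseux u (Nat.find hnd) Q.natDegree (fun t => Q.map (evalRingHom t)) ⟨?_, ?_⟩ ?_ ?_ τ y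
    hpos hτ hy ?_
  · exact fun t => natDegree_map_le
  · intro j
    simp only [hc]
    exact (AnalyticOnNhd.eval_polynomial (𝕜 := ℝ) (Q.coeff j)) 0 (Set.mem_univ _)
  · intro j hj
    rw [hc]
    exact not_not.1 (Nat.find_min hnd hj)
  · rw [hc]
    exact Nat.find_spec hnd
  · filter_upwards [hPy, hpos] with n hn hp
    rw [hQ] at hn
    unfold bev at hn
    rw [Polynomial.map_mul, Polynomial.map_pow, Polynomial.map_C, eval_mul, eval_pow, eval_C] at hn
    refine (mul_eq_zero.1 hn).resolve_left (pow_ne_zero _ ?_)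
    simpa using hp.ne'

noncomputable instance Hy.instAlg : Algebra ℝ Hy :=
  ((Germ.coeRingHom (hyperfilter ℕ : Filter ℕ)).comp (Pi.constRingHom ℕ ℝ) : ℝ →+* Hy).toAlgebra

lemma Hy.aeval_mv {κ : Type} (f : MvPolynomial κ ℝ) (a : κ → ℕ → ℝ) :
    MvPolynomial.aeval (fun i => (Germ.coeRingHom _ (a i) : Hy)) f =
      Germ.coeRingHom _ (fun n => MvPolynomial.eval (fun i => a i n) f) := by
  induction f using MvPolynomial.induction_on with
  | C r => simp only [MvPolynomial.aeval_C, MvPolynomial.eval_C]; rfl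
  | add p q hp hq =>
    rw [map_add, hp, hq, ← map_add]
    congr 1
    ext n
    simp
  | mul_X p i hp =>
    rw [map_mul, hp, MvPolynomial.aeval_X, ← map_mul]
    congr 1
    ext n
    simp

lemma Hy.aeval_poly (f : ℝ[X]) (a : ℕ → ℝ) :
    aeval (Germ.coeRingHom _ a : Hy) f = Germ.coeRingHom _ (fun n => f.eval (a n)) := by
  induction f using Polynomial.induction_on' with
  | monomial k r =>
    rw [aeval_monomial]
    simp only [eval_monomial]
    have : algebraMap ℝ Hy r = Germ.coeRingHom _ (fun _ => r) := rfl
    rw [this, ← map_pow, ← map_mul]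
    rfl
  | add p q hp hq =>
    rw [map_add, hp, hq, ← map_add]
    congr 1
    ext n
    simp

lemma Hy.eval₂_poly (P : ℝ[X][X]) (a y : ℕ → ℝ) :
    P.eval₂ (aeval (Germ.coeRingHom _ a : Hy) : ℝ[X] →ₐ[ℝ] Hy).toRingHom (Germ.coeRingHom _ y) =
      Germ.coeRingHom _ (fun n => bev P (a n) (y n)) := by
  have : (fun n => bev P (a n) (y n)) = ∑ i ∈ Finset.range (P.natDegree + 1),
      (fun n => (P.coeff i).eval (a n)) * y ^ i := by
    ext n
    rw [bev_eq_sum]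
    simp
  rw [this, map_sum, eval₂_eq_sum_range]
  refine Finset.sum_congr rfl fun i _ => ?_
  rw [map_mul, map_pow, ← Hy.aeval_poly]
  rfl

/-- Algebraic part of curve selection: replace a sequence of points by one whose
coordinates are algebraic over a single parameter. -/
lemma spec_seq (m p : ℕ) (F : Fin p → MvPolynomial (Fin m) ℝ) (g : MvPolynomial (Fin m) ℝ)
    (X : ℕ → Fin m → ℝ) (hF : ∀ n i, MvPolynomial.eval (X n) (F i) = 0)
    (hg : ∀ n, MvPolynomial.eval (X n) g ≠ 0) :
    ∃ Y : Fin m → ℕ → ℝ,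
      (∀ i, ∃ P : ℝ[X][X], P ≠ 0 ∧ ∀ᶠ n in (hyperfilter ℕ : Filter ℕ), bev P (∑ j, X n j ^ 2) (Y i n) = 0) ∧
      (∀ᶠ n in (hyperfilter ℕ : Filter ℕ), ∑ j, Y j n ^ 2 = ∑ j, X n j ^ 2) ∧
      (∀ i, ∀ᶠ n in (hyperfilter ℕ : Filter ℕ), MvPolynomial.eval (fun j => Y j n) (F i) = 0) ∧
      (∀ᶠ n in (hyperfilter ℕ : Filter ℕ), MvPolynomial.eval (fun j => Y j n) g ≠ 0) := by
  classical
  let r : ℕ → ℝ := fun n => ∑ j, X n j ^ 2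
  let ρ : Hy := Germ.coeRingHom _ r
  let A : Option (Fin m) → ℕ → ℝ := fun o n => o.elim (MvPolynomial.eval (X n) g)⁻¹ (X n)
  let x : Option (Fin m) → Hy := fun o => Germ.coeRingHom _ (A o)
  let E := algebraicClosure (IntermediateField.adjoin ℝ {ρ}) Hy
  have hρ : ρ ∈ E := by
    rw [mem_algebraicClosure_iff]
    exact isAlgebraic_algebraMap
      (⟨ρ, IntermediateField.mem_adjoin_simple_self ℝ ρ⟩ : IntermediateField.adjoin ℝ {ρ})
  obtain ⟨x', hx'⟩ := chain_spec hyper_cont (Finset.univ.toList.map x) E (by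
    intro y hy
    have : y ∈ E := by
      rw [mem_algebraicClosure_iff]
      exact IsAlgebraic.restrictScalars _ hy
    exact ⟨⟨y, this⟩, rfl⟩) x (by
    intro i
    left
    simp)
  choose B hB using fun o => Hy.exists_rep (x' o : Hy)
  have hBx : (fun o => (Germ.coeRingHom _ (B o) : Hy)) = fun o => (x' o : Hy) := funext hB
  have key : ∀ f : MvPolynomial (Option (Fin m)) ℝ, (∀ n, MvPolynomial.eval (fun o => A o n) f = 0) →
      ∀ᶠ n in (hyperfilter ℕ : Filter ℕ), MvPolynomial.eval (fun o => B o n) f = 0 := by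
    intro f hf
    have h1 : MvPolynomial.aeval x f = 0 := by
      simp only [x]
      rw [Hy.aeval_mv, Hy.zero_iff]
      exact Eventually.of_forall hf
    have h3 := hx' (f.map (algebraMap ℝ E)) (by
      rw [MvPolynomial.aeval_def, MvPolynomial.eval₂_map]; exact h1)
    rw [MvPolynomial.eval_map] at h3
    have h4 := congrArg (algebraMap E Hy) h3
    rw [map_zero, MvPolynomial.eval₂_comp_left] at h4
    have h5 : MvPolynomial.aeval (fun o => (Germ.coeRingHom _ (B o) : Hy)) f = 0 := by
      rw [hBx]
      exact h4
    rw [Hy.aeval_mv, Hy.zero_iff] at h5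
    exact h5
  refine ⟨fun i => B (some i), ?_, ?_, ?_, ?_⟩
  · intro i
    obtain ⟨P, hP0, hP⟩ := alg_adjoin_simple ρ _ (mem_algebraicClosure_iff.1 (x' (some i)).2)
    refine ⟨P, hP0, ?_⟩
    rw [← hB] at hP
    have h2 := (Hy.eval₂_poly P r (B (some i))).symm.trans hP
    rw [Hy.zero_iff] at h2
    exact h2
  · have h1 := hx' (∑ j, MvPolynomial.X (some j) ^ 2 - MvPolynomial.C (⟨ρ, hρ⟩ : E)) (by
      simp only [map_sub, map_sum, map_pow, MvPolynomial.aeval_X, MvPolynomial.aeval_C]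
      have e : algebraMap E Hy ⟨ρ, hρ⟩ = ρ := rfl
      rw [e]
      simp only [x, ρ]
      rw [sub_eq_zero]
      simp only [← map_pow]
      rw [← map_sum]
      congr 1
      ext n
      simp [A, r])
    simp only [map_sub, map_sum, map_pow, MvPolynomial.eval_X, MvPolynomial.eval_C] at h1
    have h2 := congrArg (algebraMap E Hy) h1
    simp only [map_sub, map_sum, map_pow, map_zero] at h2
    have h3 : (Germ.coeRingHom _ (∑ j, B (some j) ^ 2 - r) : Hy) = 0 := by
      rw [map_sub, map_sum]
      simp only [map_pow, hB]
      exact h2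
    rw [Hy.zero_iff] at h3
    filter_upwards [h3] with n hn
    simpa [r, sub_eq_zero] using hn
  · intro i
    have := key (MvPolynomial.rename some (F i)) (by
      intro n
      rw [MvPolynomial.eval_rename]
      exact hF n i)
    filter_upwards [this] with n hn
    rw [MvPolynomial.eval_rename] at hn
    exact hn
  · have := key (MvPolynomial.X none * MvPolynomial.rename some g - 1) (by
      intro n
      rw [map_sub, map_mul, MvPolynomial.eval_rename, MvPolynomial.eval_X, map_one, sub_eq_zero]
      exact inv_mul_cancel₀ (hg n))
    filter_upwards [this] with n hn
    rw [map_sub, map_mul, MvPolynomial.eval_rename, MvPolynomial.eval_X, map_one, sub_eq_zero] at hn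
    intro h0
    have h0' : MvPolynomial.eval ((fun o => B o n) ∘ some) g = 0 := h0
    rw [h0', mul_zero] at hn
    exact zero_ne_one hn

lemma curve_of_seq (m p : ℕ) (F : Fin p → MvPolynomial (Fin m) ℝ) (u : Ultrafilter ℕ)
    (r : ℕ → ℝ) (Y : Fin m → ℕ → ℝ) (hpos : ∀ᶠ n in (u : Filter ℕ), 0 < r n)
    (hr : Tendsto r u (𝓝 0)) (hY : ∀ i, Tendsto (Y i) u (𝓝 0)) (hP : ∀ i, PuisSer u r (Y i))
    (hF : ∀ i, ∀ᶠ n in (u : Filter ℕ), MvPolynomial.eval (fun j => Y j n) (F i) = 0) :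
    ∃ c : ℝ → Fin m → ℝ, ∃ δ > 0, AnalyticOn ℝ c (Set.Ico 0 δ) ∧ c 0 = 0 ∧
      (∀ t ∈ Set.Ico (0 : ℝ) δ, ∀ i, MvPolynomial.eval (c t) (F i) = 0) ∧
      ∀ᶠ n in (u : Filter ℕ), ∃ t ∈ Set.Ico (0 : ℝ) δ, (fun j => Y j n) = c t := by
  choose l hl φ hφ hφY using hP
  let lt : ℕ := ∏ i, l i
  have hlt : 0 < lt := Finset.prod_pos fun i _ => hl i
  choose e he using fun i => Finset.dvd_prod_of_mem l (Finset.mem_univ i)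
  have he0 : ∀ i, 0 < e i := by
    intro i
    rcases Nat.eq_zero_or_pos (e i) with h | h
    · have := he i
      rw [h, mul_zero] at this
      exact absurd this hlt.ne'
    · exact h
  let θ : ℕ → ℝ := fun n => r n ^ ((lt : ℝ)⁻¹)
  have hθpos : ∀ᶠ n in (u : Filter ℕ), 0 < θ n := by
    filter_upwards [hpos] with n hn
    exact Real.rpow_pos_of_pos hn _
  have hθ : Tendsto θ u (𝓝 0) := by
    have h2 : (0 : ℝ) < (lt : ℝ)⁻¹ := by positivity
    have := hr.rpow_const (p := (lt : ℝ)⁻¹) (Or.inr h2.le)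
    rwa [Real.zero_rpow h2.ne'] at this
  let c : ℝ → Fin m → ℝ := fun t i => φ i (t ^ e i)
  have hci : ∀ i, AnalyticAt ℝ (fun t => c t i) 0 := fun i => analyticAt_comp_pow (hφ i) (he0 i)
  have hc : AnalyticAt ℝ c 0 := analyticAt_pi_iff.2 hci
  have hcY : ∀ᶠ n in (u : Filter ℕ), (fun j => Y j n) = c (θ n) := by
    have : ∀ᶠ n in (u : Filter ℕ), ∀ j, Y j n = φ j (r n ^ ((l j : ℝ)⁻¹)) :=
      eventually_all.2 hφY
    filter_upwards [this, hpos] with n hn hpn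
    ext j
    rw [hn j]
    simp only [c, θ]
    congr 1
    have hel : lt = l j * e j := he j
    rw [← Real.rpow_natCast, ← Real.rpow_mul hpn.le, hel]
    congr 1
    have h1 : (e j : ℝ) ≠ 0 := by exact_mod_cast (he0 j).ne'
    have h2 : (l j : ℝ) ≠ 0 := by exact_mod_cast (hl j).ne'
    push_cast
    field_simp
  have hc0 : c 0 = 0 := by
    have h1 : Tendsto (fun n => c (θ n)) u (𝓝 (c 0)) := hc.continuousAt.tendsto.comp hθ
    have h2 : Tendsto (fun n j => Y j n) u (𝓝 (0 : Fin m → ℝ)) := tendsto_pi_nhds.2 hY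
    exact tendsto_nhds_unique h1 (h2.congr' hcY)
  have hFc : ∀ i, ∀ᶠ t in 𝓝 0, MvPolynomial.eval (c t) (F i) = 0 := by
    intro i
    have han : AnalyticAt ℝ (fun t => MvPolynomial.eval (c t) (F i)) 0 :=
      AnalyticAt.aeval_mvPolynomial hci (F i)
    rw [← han.frequently_zero_iff_eventually_zero]
    have h1 : Tendsto θ u (𝓝[≠] 0) := by
      rw [tendsto_nhdsWithin_iff]
      refine ⟨hθ, ?_⟩
      filter_upwards [hθpos] with n hn
      exact hn.ne'
    refine h1.frequently (Eventually.frequently ?_)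
    filter_upwards [hF i, hcY] with n hn hn2
    rw [← hn2]
    exact hn
  obtain ⟨δ, hδ, hball⟩ := Metric.eventually_nhds_iff.1
    ((eventually_all.2 hFc).and hc.eventually_analyticAt)
  have hIco : ∀ t ∈ Set.Ico (0 : ℝ) δ, dist t 0 < δ := by
    intro t ht
    rw [Real.dist_0_eq_abs, abs_of_nonneg ht.1]
    exact ht.2
  refine ⟨c, δ, hδ, fun t ht => (hball (hIco t ht)).2.analyticWithinAt, hc0,
    fun t ht => (hball (hIco t ht)).1, ?_⟩
  filter_upwards [hcY, hθpos, hθ.eventually_lt_const hδ] with n hn hp hlt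
  exact ⟨θ n, ⟨hp.le, hlt⟩, hn⟩

/-- Curve-selection corollary: let `Z` and `L` be algebraic sets in `ℝᵐ` (zero sets of
families of polynomials).  If `L` contains every real-analytic curve `[0,δ) → ℝᵐ` starting
at `0` and lying entirely in `Z`, then `L` contains all points of `Z` sufficiently close
to `0`. -/
theorem stmt19 (m p q : ℕ)
    (F : Fin p → MvPolynomial (Fin m) ℝ) (G : Fin q → MvPolynomial (Fin m) ℝ)
    (Z L : Set (Fin m → ℝ))
    (hZ : Z = {x | ∀ i, MvPolynomial.eval x (F i) = 0})
    (hL : L = {x | ∀ i, MvPolynomial.eval x (G i) = 0})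
    (hcurve : ∀ δ : ℝ, 0 < δ → ∀ c : ℝ → (Fin m → ℝ),
      AnalyticOn ℝ c (Set.Ico 0 δ) → c 0 = 0 →
      (∀ t ∈ Set.Ico (0 : ℝ) δ, c t ∈ Z) → ∀ t ∈ Set.Ico (0 : ℝ) δ, c t ∈ L) :
    ∃ ε > 0, ∀ x ∈ Z, ‖x‖ < ε → x ∈ L := by
  by_contra hcon
  push Not at hcon
  choose X hXZ hXn hXL using fun n : ℕ => hcon (1 / ((n : ℝ) + 1)) (by positivity)
  have h0 : (0 : Fin m → ℝ) ∈ Z → (0 : Fin m → ℝ) ∈ L := fun h =>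
    hcurve 1 one_pos (fun _ => 0) analyticOn_const rfl (fun _ _ => h) 0 ⟨le_rfl, one_pos⟩
  have hX0 : ∀ n, X n ≠ 0 := fun n h => hXL n (by rw [h]; exact h0 (h ▸ hXZ n))
  have hXlim : Tendsto X (hyperfilter ℕ : Filter ℕ) (𝓝 0) := by
    have : Tendsto X atTop (𝓝 0) :=
      squeeze_zero_norm (fun n => (hXn n).le) tendsto_one_div_add_atTop_nhds_zero_nat
    exact this.mono_left Nat.hyperfilter_le_atTop
  have hXi : ∀ i, Tendsto (fun n => X n i) (hyperfilter ℕ : Filter ℕ) (𝓝 0) := fun i =>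
    (tendsto_pi_nhds.1 hXlim) i
  let g : MvPolynomial (Fin m) ℝ := ∑ i, G i ^ 2
  have hge : ∀ x, MvPolynomial.eval x g = ∑ i, MvPolynomial.eval x (G i) ^ 2 := by
    intro x
    simp [g]
  have hg : ∀ n, MvPolynomial.eval (X n) g ≠ 0 := by
    intro n hn
    apply hXL n
    rw [hge, Finset.sum_eq_zero_iff_of_nonneg (fun _ _ => sq_nonneg _)] at hn
    rw [hL]
    intro i
    exact pow_eq_zero_iff two_ne_zero |>.1 (hn i (Finset.mem_univ i))
  obtain ⟨Y, hY1, hY2, hY3, hY4⟩ := spec_seq m p F g X (fun n i => by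
    have := hXZ n
    rw [hZ] at this
    exact this i) hg
  let r : ℕ → ℝ := fun n => ∑ j, X n j ^ 2
  have hrpos : ∀ n, 0 < r n := by
    intro n
    obtain ⟨j, hj⟩ := Function.ne_iff.1 (hX0 n)
    refine Finset.sum_pos' (fun _ _ => sq_nonneg _) ⟨j, Finset.mem_univ j, ?_⟩
    exact (sq_pos_of_ne_zero hj)
  have hr : Tendsto r (hyperfilter ℕ : Filter ℕ) (𝓝 0) := by
    have : Tendsto r (hyperfilter ℕ : Filter ℕ) (𝓝 (∑ _j : Fin m, (0 : ℝ) ^ 2)) :=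
      tendsto_finsetSum _ fun j _ => (hXi j).pow 2
    simpa using this
  have hY0 : ∀ i, Tendsto (Y i) (hyperfilter ℕ : Filter ℕ) (𝓝 0) := by
    intro i
    have h2 : Tendsto (fun n => √(r n)) (hyperfilter ℕ : Filter ℕ) (𝓝 0) := by
      have := hr.sqrt
      rwa [Real.sqrt_zero] at this
    refine squeeze_zero_norm' ?_ h2
    filter_upwards [hY2] with n hn
    rw [Real.norm_eq_abs]
    apply Real.abs_le_sqrt
    change _ ≤ ∑ j, X n j ^ 2
    rw [← hn]
    exact Finset.single_le_sum (f := fun j => Y j n ^ 2) (fun _ _ => sq_nonneg _) (Finset.mem_univ i)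
  obtain ⟨c, δ, hδ, hc, hc0, hcF, hcY⟩ := curve_of_seq m p F (hyperfilter ℕ) r Y
    (Eventually.of_forall hrpos) hr hY0 (fun i => by
      obtain ⟨P, hP0, hP⟩ := hY1 i
      exact puiseux_start _ P hP0 r (Y i) (Eventually.of_forall hrpos) hr (hY0 i) hP) hY3
  have hcL := hcurve δ hδ c hc hc0 (fun t ht => by rw [hZ]; exact hcF t ht)
  obtain ⟨n, ⟨t, ht, hYt⟩, hn⟩ := (hcY.and hY4).exists
  apply hn
  have h5 := hcL t ht
  rw [hL] at h5
  rw [hYt, hge]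
  refine Finset.sum_eq_zero fun i _ => ?_
  rw [h5 i]
  norm_num
end
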